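/- For the Dedekind psi function Ψ, ∑_{n ≤ x} Ψ(⌊x/n⌋)/⌊x/n⌋ = x · ∑_{m ≥ 1} Ψ(m)/(m²(m+1)) + O(x^{1/3} log x) as x → ∞. -/

import Mathlib

open Filter Finset

/-- The Dedekind psi function `Ψ = id ∗ μ²`, i.e. `Ψ(n) = ∑_{d ∣ n} d · μ(n/d)²`. -/
noncomputable def dedekindPsi (n : ℕ) : ℝ :=
  ∑ d ∈ n.divisors, (d : ℝ) * (ArithmeticFunction.moebius (n / d) : ℝ) ^ 2

/-- The additive character `t ↦ exp(2πit)`. -/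
noncomputable def unitExp (t : ℝ) : ℂ := Complex.exp ((2 * Real.pi * t : ℝ) * Complex.I)

lemma norm_unitExp (t : ℝ) : ‖unitExp t‖ = 1 := Complex.norm_exp_ofReal_mul_I _

lemma unitExp_add (s t : ℝ) : unitExp (s + t) = unitExp s * unitExp t := by
  rw [unitExp, unitExp, unitExp, ← Complex.exp_add]
  congr 1
  push_cast
  ring

lemma unitExp_re (t : ℝ) : (unitExp t).re = Real.cos (2 * Real.pi * t) := by
  rw [unitExp, Complex.exp_ofReal_mul_I_re]

lemma unitExp_add_int (t : ℝ) (k : ℤ) : unitExp (t + k) = unitExp t := by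
  have h : unitExp k = 1 := by
    rw [unitExp]
    have := Complex.exp_int_mul_two_pi_mul_I k
    rw [← this]
    congr 1
    push_cast
    ring
  rw [unitExp_add, h, mul_one]

lemma norm_unitExp_sub_one_le (t : ℝ) : ‖unitExp t - 1‖ ≤ 2 * Real.pi * |t| := by
  have := Real.norm_exp_I_mul_ofReal_sub_one_le (x := 2 * Real.pi * t)
  rw [unitExp, mul_comm _ Complex.I]
  refine this.trans_eq ?_
  rw [Real.norm_eq_abs, abs_mul, abs_of_pos Real.two_pi_pos]

lemma norm_unitExp_sub_one_le_two (t : ℝ) : ‖unitExp t - 1‖ ≤ 2 := by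
  refine (norm_sub_le _ _).trans ?_
  rw [norm_unitExp, norm_one]
  norm_num

/-- `1 / (1 - exp(2πig))`, written through the cotangent. -/
noncomputable def geomWeight (g : ℝ) : ℂ :=
  1 / 2 + ((Real.cos (Real.pi * g) / Real.sin (Real.pi * g) / 2 : ℝ) : ℂ) * Complex.I

lemma geomWeight_mul (g : ℝ) (hg : Real.sin (Real.pi * g) ≠ 0) :
    geomWeight g * (1 - unitExp g) = 1 := by
  have h1 : unitExp g = ((Real.cos (2 * (Real.pi * g)) : ℝ) : ℂ)
      + ((Real.sin (2 * (Real.pi * g)) : ℝ) : ℂ) * Complex.I := by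
    rw [unitExp, Complex.exp_mul_I, ← Complex.ofReal_cos, ← Complex.ofReal_sin, mul_assoc]
  rw [h1, geomWeight, Real.cos_two_mul, Real.sin_two_mul]
  have h2 := Real.sin_sq_add_cos_sq (Real.pi * g)
  set s := Real.sin (Real.pi * g)
  set c := Real.cos (Real.pi * g)
  apply Complex.ext
  · simp [pow_two]
    field_simp
    ring
  · simp [pow_two]
    field_simp
    linear_combination (-2) * c * h2

lemma two_mul_le_sin_pi_mul {θ g : ℝ} (hθ : 0 < θ) (h1 : θ ≤ g) (h2 : g ≤ 1 - θ) :
    2 * θ ≤ Real.sin (Real.pi * g) := by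
  have hpi := Real.pi_pos
  rcases le_total g (1 / 2) with h | h
  · have := Real.mul_le_sin (x := Real.pi * g) (by nlinarith) (by nlinarith)
    have e : 2 / Real.pi * (Real.pi * g) = 2 * g := by field_simp
    linarith
  · have := Real.mul_le_sin (x := Real.pi * (1 - g)) (by nlinarith) (by nlinarith)
    have e : 2 / Real.pi * (Real.pi * (1 - g)) = 2 * (1 - g) := by field_simp
    have e2 : Real.sin (Real.pi * (1 - g)) = Real.sin (Real.pi * g) := by
      rw [← Real.sin_pi_sub]; congr 1; ring
    linarith

lemma abs_cot_le {θ g : ℝ} (hθ : 0 < θ) (h1 : θ ≤ g) (h2 : g ≤ 1 - θ) :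
    |Real.cos (Real.pi * g) / Real.sin (Real.pi * g)| ≤ 1 / (2 * θ) := by
  have hs := two_mul_le_sin_pi_mul hθ h1 h2
  rw [abs_div, abs_of_pos (a := Real.sin _) (by linarith)]
  exact div_le_div₀ zero_le_one (Real.abs_cos_le_one _) (by linarith) hs

lemma cot_antitone {θ g g' : ℝ} (hθ : 0 < θ) (h1 : θ ≤ g) (h : g ≤ g') (h2 : g' ≤ 1 - θ) :
    Real.cos (Real.pi * g') / Real.sin (Real.pi * g') ≤
      Real.cos (Real.pi * g) / Real.sin (Real.pi * g) := by
  have hs := two_mul_le_sin_pi_mul hθ h1 (h.trans h2)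
  have hs' := two_mul_le_sin_pi_mul hθ (h1.trans h) h2
  have hpi := Real.pi_pos
  rw [div_le_div_iff₀ (by linarith) (by linarith)]
  have := Real.sin_nonneg_of_nonneg_of_le_pi (x := Real.pi * g' - Real.pi * g)
    (by nlinarith) (by nlinarith)
  rw [Real.sin_sub] at this
  linarith

lemma norm_geomWeight_le {θ g : ℝ} (hθ : 0 < θ) (h1 : θ ≤ g) (h2 : g ≤ 1 - θ) :
    ‖geomWeight g‖ ≤ 1 / 2 + 1 / (4 * θ) := by
  refine (norm_add_le _ _).trans ?_
  have := abs_cot_le hθ h1 h2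
  rw [norm_mul, Complex.norm_I, mul_one, Complex.norm_real, Real.norm_eq_abs, abs_div,
    abs_of_pos (two_pos (α := ℝ))]
  have e : 1 / (4 * θ) = 1 / (2 * θ) / 2 := by field_simp; norm_num
  have e' : ‖(1 / 2 : ℂ)‖ = 1 / 2 := by norm_num
  rw [e, e']
  linarith

lemma norm_geomWeight_sub_le {θ g g' : ℝ} (hθ : 0 < θ) (h1 : θ ≤ g) (h : g ≤ g')
    (h2 : g' ≤ 1 - θ) :
    ‖geomWeight g' - geomWeight g‖ ≤ (Real.cos (Real.pi * g) / Real.sin (Real.pi * g) -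
      Real.cos (Real.pi * g') / Real.sin (Real.pi * g')) / 2 := by
  have := cot_antitone hθ h1 h h2
  have e : geomWeight g' - geomWeight g = (((Real.cos (Real.pi * g') / Real.sin (Real.pi * g') -
      Real.cos (Real.pi * g) / Real.sin (Real.pi * g)) / 2 : ℝ) : ℂ) * Complex.I := by
    rw [geomWeight, geomWeight]; push_cast; ring
  rw [e, norm_mul, Complex.norm_I, mul_one, Complex.norm_real, Real.norm_eq_abs, abs_le]
  constructor <;> linarith

/-- **Kusmin–Landau** inequality, for frequencies strictly between `0` and `1`. -/
lemma norm_sum_unitExp_range_le {θ : ℝ} (hθ : 0 < θ) (a : ℕ → ℝ) (N : ℕ)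
    (hg : ∀ n < N, θ ≤ a (n + 1) - a n ∧ a (n + 1) - a n ≤ 1 - θ)
    (hmono : ∀ n, n + 1 < N → a (n + 1) - a n ≤ a (n + 2) - a (n + 1)) :
    ‖∑ n ∈ range N, unitExp (a n)‖ ≤ 2 / θ := by
  rcases Nat.eq_zero_or_pos N with rfl | hN
  · simp; positivity
  have key : ∀ k, k < N → ∃ R : ℂ, ∑ n ∈ range (k + 1), unitExp (a n) =
      geomWeight (a 1 - a 0) * unitExp (a 0)
        - geomWeight (a (k + 1) - a k) * unitExp (a (k + 1)) + R ∧
      ‖R‖ ≤ (Real.cos (Real.pi * (a 1 - a 0)) / Real.sin (Real.pi * (a 1 - a 0)) -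
        Real.cos (Real.pi * (a (k + 1) - a k)) / Real.sin (Real.pi * (a (k + 1) - a k))) / 2 := by
    have step : ∀ n < N, unitExp (a n) = geomWeight (a (n + 1) - a n) * unitExp (a n)
        - geomWeight (a (n + 1) - a n) * unitExp (a (n + 1)) := by
      intro n hn
      have hs := two_mul_le_sin_pi_mul hθ (hg n hn).1 (hg n hn).2
      have h1 := geomWeight_mul (a (n + 1) - a n) (by linarith)
      have h2 : unitExp (a (n + 1)) = unitExp (a n) * unitExp (a (n + 1) - a n) := by
        rw [← unitExp_add]; congr 1; ring
      rw [h2]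
      linear_combination (-unitExp (a n)) * h1
    intro k
    induction k with
    | zero =>
      intro _
      refine ⟨0, ?_, by simp⟩
      rw [zero_add, sum_range_one, add_zero]
      exact step 0 hN
    | succ k ih =>
      intro hk
      obtain ⟨R, hR, hR'⟩ := ih (by omega)
      refine ⟨R + (geomWeight (a (k + 1 + 1) - a (k + 1)) - geomWeight (a (k + 1) - a k)) *
        unitExp (a (k + 1)), ?_, ?_⟩
      · rw [sum_range_succ, hR]
        linear_combination step (k + 1) hk
      · refine (norm_add_le _ _).trans ?_
        rw [norm_mul, norm_unitExp, mul_one]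
        have := norm_geomWeight_sub_le hθ (hg k (by omega)).1 (hmono k hk) (hg (k + 1) hk).2
        linarith
  obtain ⟨R, hR, hR'⟩ := key (N - 1) (by omega)
  rw [Nat.sub_add_cancel hN] at hR hR'
  have g0 := hg 0 hN
  have g1 := hg (N - 1) (by omega)
  rw [Nat.sub_add_cancel hN] at g1
  rw [zero_add] at g0
  rw [hR]
  refine (norm_add_le _ _).trans ?_
  have h1 := norm_sub_le (geomWeight (a 1 - a 0) * unitExp (a 0))
    (geomWeight (a N - a (N - 1)) * unitExp (a N))
  rw [norm_mul, norm_mul, norm_unitExp, norm_unitExp, mul_one, mul_one] at h1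
  have h2 := norm_geomWeight_le hθ g0.1 g0.2
  have h3 := norm_geomWeight_le hθ g1.1 g1.2
  have h4 := (abs_le.1 (abs_cot_le hθ g0.1 g0.2)).2
  have h5 := (abs_le.1 (abs_cot_le hθ g1.1 g1.2)).1
  have e1 : 1 / (4 * θ) = 1 / θ / 4 := by field_simp
  have e2 : 1 / (2 * θ) = 1 / θ / 2 := by field_simp
  have e3 : 2 / θ = 2 * (1 / θ) := by field_simp
  have e4 : 1 ≤ 1 / θ := by
    rw [le_div_iff₀ hθ]; linarith [g0.1, g0.2]
  rw [e1] at h2 h3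
  rw [e2] at h4 h5
  rw [e3]
  linarith

/-- **Kusmin–Landau** inequality. -/
lemma norm_sum_unitExp_Ico_le {θ : ℝ} (hθ : 0 < θ) (a : ℕ → ℝ) (p q : ℕ) (j : ℤ)
    (hg : ∀ n ∈ Ico p q, j + θ ≤ a (n + 1) - a n ∧ a (n + 1) - a n ≤ j + 1 - θ)
    (hmono : ∀ n ∈ Ico p q, a (n + 1) - a n ≤ a (n + 2) - a (n + 1)) :
    ‖∑ n ∈ Ico p q, unitExp (a n)‖ ≤ 2 / θ := by
  rw [sum_Ico_eq_sum_range]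
  have e : ∀ n : ℕ, unitExp (a (p + n)) = unitExp (a (p + n) - j * n) := by
    intro n
    rw [← unitExp_add_int _ (-(j * n))]
    congr 1
    push_cast
    ring
  simp_rw [e]
  apply norm_sum_unitExp_range_le hθ (fun n => a (p + n) - j * n)
  · intro n hn
    have := hg (p + n) (by simp; omega)
    push_cast
    rw [← add_assoc]
    constructor <;> linarith
  · intro n hn
    have := hmono (p + n) (by simp; omega)
    push_cast
    rw [← add_assoc, ← add_assoc]
    linarith

lemma filter_range_eq_Ico (g : ℕ → ℝ) (N : ℕ) (hg : ∀ m n, m ≤ n → n < N → g m ≤ g n)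
    (P : ℝ → Prop) [DecidablePred P] (hP : ∀ u v w, u ≤ v → v ≤ w → P u → P w → P v) :
    ∃ p q, (range N).filter (fun n => P (g n)) = Ico p q := by
  rcases ((range N).filter (fun n => P (g n))).eq_empty_or_nonempty with h | h
  · exact ⟨0, 0, by simpa using h⟩
  · refine ⟨min' _ h, (max' _ h) + 1, ?_⟩
    · ext n
      have h1 := min'_mem _ h
      have h2 := max'_mem _ h
      have h3 := min'_le ((range N).filter (fun n => P (g n))) n
      have h4 := le_max' ((range N).filter (fun n => P (g n))) n
      set p := min' _ h
      set q := max' _ h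
      rw [mem_filter, mem_range] at h1 h2
      rw [mem_Ico]
      constructor
      · intro hn
        exact ⟨h3 hn, Nat.lt_succ_of_le (h4 hn)⟩
      · rintro ⟨h5, h6⟩
        rw [mem_filter, mem_range]
        refine ⟨by omega, hP _ _ _ (hg _ _ h5 (by omega)) (hg _ _ (Nat.le_of_lt_succ h6) h2.1)
          h1.2 h2.2⟩

lemma card_filter_range_le {l w : ℝ} (hl : 0 < l) (hw : 0 ≤ w) (g : ℕ → ℝ) (N : ℕ)
    (hg : ∀ m n, m ≤ n → n < N → l * ((n : ℝ) - m) ≤ g n - g m)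
    (P : ℝ → Prop) [DecidablePred P] (hP : ∀ u v w, u ≤ v → v ≤ w → P u → P w → P v)
    (hPw : ∀ u v, P u → P v → v - u ≤ w) :
    (((range N).filter (fun n => P (g n))).card : ℝ) ≤ w / l + 1 := by
  have hm : ∀ m n, m ≤ n → n < N → g m ≤ g n := by
    intro m n h h'
    have h1 := hg m n h h'
    have : (m : ℝ) ≤ n := by exact_mod_cast h
    nlinarith
  obtain ⟨p, q, h⟩ := filter_range_eq_Ico g N hm P hP
  rw [h, Nat.card_Ico]
  rcases Nat.lt_or_ge p q with hpq | hpq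
  · have h1 : p ∈ Ico p q := by simp; omega
    have h2 : q - 1 ∈ Ico p q := by simp; omega
    rw [← h, mem_filter, mem_range] at h1 h2
    have h3 := hg p (q - 1) (by omega) h2.1
    have h4 := hPw _ _ h1.2 h2.2
    rw [Nat.cast_sub (by omega)] at h3
    rw [Nat.cast_sub hpq.le, ← sub_le_iff_le_add, le_div_iff₀ hl]
    push_cast at h3
    linarith
  · rw [Nat.sub_eq_zero_of_le hpq]
    push_cast
    positivity

lemma diff_bounds {l L : ℝ} (g : ℕ → ℝ) (N : ℕ)
    (h : ∀ n < N, l ≤ g (n + 1) - g n ∧ g (n + 1) - g n ≤ L) :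
    ∀ m n, m ≤ n → n < N → l * ((n : ℝ) - m) ≤ g n - g m ∧ g n - g m ≤ L * ((n : ℝ) - m) := by
  intro m n hmn
  induction n, hmn using Nat.le_induction with
  | base => intro _; simp
  | succ n hmn ih =>
    intro hn
    have h1 := ih (by omega)
    have h2 := h n (by omega)
    push_cast
    constructor <;> linarith

/-- **Van der Corput's second derivative test**, for sequences with controlled second
differences. -/
lemma norm_sum_unitExp_le {l L : ℝ} (hl : 0 < l) (a : ℕ → ℝ) (N : ℕ)
    (h : ∀ n < N, l ≤ (a (n + 2) - a (n + 1)) - (a (n + 1) - a n) ∧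
      (a (n + 2) - a (n + 1)) - (a (n + 1) - a n) ≤ L) :
    ‖∑ n ∈ range N, unitExp (a n)‖ ≤ 7 * (L * N + 2) / √l := by
  rcases Nat.eq_zero_or_pos N with rfl | hN
  · simp; positivity
  have hlL : l ≤ L := (h 0 hN).1.trans (h 0 hN).2
  have hsl : 0 < √l := Real.sqrt_pos.2 hl
  have hsq : √l * √l = l := Real.mul_self_sqrt hl.le
  rcases lt_or_ge 1 l with hl1 | hl1
  · have : ‖∑ n ∈ range N, unitExp (a n)‖ ≤ N := by
      refine (norm_sum_le _ _).trans ?_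
      simp [norm_unitExp]
    refine this.trans ?_
    rw [le_div_iff₀ hsl]
    have h1 : √l ≤ l := by
      have : 1 ≤ √l := Real.one_le_sqrt.2 hl1.le
      nlinarith
    have : (0 : ℝ) ≤ N := by positivity
    nlinarith
  set g : ℕ → ℝ := fun n => a (n + 1) - a n with hgdef
  have hd := diff_bounds g N h
  have hm : ∀ m n, m ≤ n → n < N → g m ≤ g n := by
    intro m n h1 h'
    have h1' := (hd m n h1 h').1
    have : (m : ℝ) ≤ n := by exact_mod_cast h1
    nlinarith
  have hmaps : ∀ n ∈ range N, ⌊g n⌋ ∈ Icc ⌊g 0⌋ ⌊g (N - 1)⌋ := by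
    intro n hn
    rw [mem_range] at hn
    rw [mem_Icc]
    exact ⟨Int.floor_mono (hm _ _ (by omega) hn), Int.floor_mono (hm _ _ (by omega) (by omega))⟩
  rw [← sum_fiberwise_of_maps_to hmaps]
  have hs1 : √l ≤ 1 := Real.sqrt_le_one.2 hl1
  set θ := √l / 2 with hθdef
  have hθ : 0 < θ := by positivity
  have hfib : ∀ j ∈ Icc ⌊g 0⌋ ⌊g (N - 1)⌋,
      ‖∑ n ∈ (range N).filter (fun n => ⌊g n⌋ = j), unitExp (a n)‖ ≤ 7 / √l := by
    intro j _
    have hsub : ∑ n ∈ (range N).filter (fun n => ⌊g n⌋ = j), unitExp (a n) =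
        ∑ n ∈ (range N).filter (fun n => j ≤ g n ∧ g n < j + θ), unitExp (a n) +
        (∑ n ∈ (range N).filter (fun n => j + θ ≤ g n ∧ g n ≤ j + 1 - θ), unitExp (a n) +
        ∑ n ∈ (range N).filter (fun n => j + 1 - θ < g n ∧ g n < j + 1), unitExp (a n)) := by
      rw [sum_filter, sum_filter, sum_filter, sum_filter, ← sum_add_distrib, ← sum_add_distrib]
      refine sum_congr rfl fun n _ => ?_
      simp only [Int.floor_eq_iff]
      split_ifs <;> first | (exfalso; grind) | simp
    have hcard : ∀ (P : ℝ → Prop) [DecidablePred P],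
        (∀ u v w, u ≤ v → v ≤ w → P u → P w → P v) → (∀ u v, P u → P v → v - u ≤ θ) →
        ‖∑ n ∈ (range N).filter (fun n => P (g n)), unitExp (a n)‖ ≤ θ / l + 1 := by
      intro P _ h1 h2
      refine le_trans ?_ (card_filter_range_le hl hθ.le g N (fun m n x y => (hd m n x y).1) P h1 h2)
      refine (norm_sum_le _ _).trans ?_
      simp [norm_unitExp]
    have b1 := hcard (fun y => j ≤ y ∧ y < j + θ)
      (fun u v w h1 h2 h3 h4 => ⟨by linarith [h3.1], by linarith [h4.2]⟩)
      (fun u v h1 h2 => by linarith [h1.1, h2.2])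
    have b3 := hcard (fun y => j + 1 - θ < y ∧ y < j + 1)
      (fun u v w h1 h2 h3 h4 => ⟨by linarith [h3.1], by linarith [h4.2]⟩)
      (fun u v h1 h2 => by linarith [h1.1, h2.2])
    obtain ⟨p, q, hpq⟩ := filter_range_eq_Ico g N hm (fun y => j + θ ≤ y ∧ y ≤ j + 1 - θ)
      (fun u v w h1 h2 h3 h4 => ⟨by linarith [h3.1], by linarith [h4.2]⟩)
    have b2 : ‖∑ n ∈ (range N).filter (fun n => j + θ ≤ g n ∧ g n ≤ j + 1 - θ),
        unitExp (a n)‖ ≤ 2 / θ := by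
      rw [hpq]
      apply norm_sum_unitExp_Ico_le hθ a p q j
      · intro n hn
        rw [← hpq, mem_filter] at hn
        exact hn.2
      · intro n hn
        rw [← hpq, mem_filter, mem_range] at hn
        linarith [(h n hn.1).1]
    rw [hsub]
    refine (norm_add_le _ _).trans ?_
    have b4 := norm_add_le
      (∑ n ∈ (range N).filter (fun n => j + θ ≤ g n ∧ g n ≤ j + 1 - θ), unitExp (a n))
      (∑ n ∈ (range N).filter (fun n => j + 1 - θ < g n ∧ g n < j + 1), unitExp (a n))
    have e1 : θ / l = 1 / √l / 2 := by
      rw [hθdef]; field_simp; linarith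
    have e2 : 2 / θ = 4 * (1 / √l) := by
      rw [hθdef]; field_simp; norm_num
    have e3 : 7 / √l = 7 * (1 / √l) := by field_simp
    have e4 : 1 ≤ 1 / √l := by rw [le_div_iff₀ hsl]; linarith
    rw [e1] at b1 b3
    rw [e2] at b2
    rw [e3]
    linarith
  refine (norm_sum_le_of_le _ hfib).trans ?_
  rw [sum_const, nsmul_eq_mul, Int.card_Icc]
  have h1 : ((⌊g (N - 1)⌋ + 1 - ⌊g 0⌋).toNat : ℝ) ≤ L * N + 2 := by
    have h2 : ⌊g 0⌋ ≤ ⌊g (N - 1)⌋ := Int.floor_mono (hm _ _ (by omega) (by omega))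
    have h3 : (((⌊g (N - 1)⌋ + 1 - ⌊g 0⌋).toNat : ℤ) : ℝ) = ⌊g (N - 1)⌋ + 1 - ⌊g 0⌋ := by
      rw [Int.toNat_of_nonneg (by omega)]; push_cast; ring
    rw [Int.cast_natCast] at h3
    rw [h3]
    have h4 := (hd 0 (N - 1) (by omega) (by omega)).2
    rw [Nat.cast_sub hN] at h4
    push_cast at h4
    linarith [Int.floor_le (g (N - 1)), Int.lt_floor_add_one (g 0)]
  have : 7 * (L * N + 2) / √l = (L * N + 2) * (7 / √l) := by ring
  rw [this]
  gcongr

/-- The sawtooth function `{t} - 1/2`. -/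
noncomputable def sawtooth (t : ℝ) : ℝ := Int.fract t - 1 / 2

/-- The periodic primitive `({t}² - {t}) / 2` of the sawtooth function. -/
noncomputable def sawtoothPrim (t : ℝ) : ℝ := (Int.fract t ^ 2 - Int.fract t) / 2

lemma abs_sawtooth_le (t : ℝ) : |sawtooth t| ≤ 1 / 2 := by
  rw [sawtooth, abs_le]
  constructor <;> linarith [Int.fract_nonneg t, Int.fract_lt_one t]

lemma fract_add_cases {δ : ℝ} (h0 : 0 ≤ δ) (h1 : δ < 1) (t : ℝ) :
    Int.fract (t + δ) = Int.fract t + δ ∨ Int.fract (t + δ) = Int.fract t + δ - 1 := by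
  have hδ : Int.fract δ = δ := Int.fract_eq_self.2 ⟨h0, h1⟩
  obtain ⟨z, hz⟩ := Int.fract_add t δ
  rw [hδ] at hz
  have a1 := Int.fract_nonneg t
  have a2 := Int.fract_lt_one t
  have a3 := Int.fract_nonneg (t + δ)
  have a4 := Int.fract_lt_one (t + δ)
  have z1 : z < 1 := by exact_mod_cast (by linarith : (z : ℝ) < 1)
  have z2 : -2 < z := by exact_mod_cast (by push_cast; linarith : ((-2 : ℤ) : ℝ) < z)
  obtain rfl | rfl : z = 0 ∨ z = -1 := by omega
  · left; push_cast at hz; linarith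
  · right; push_cast at hz; linarith

lemma sawtoothPrim_add_sub_le {δ : ℝ} (h0 : 0 ≤ δ) (h1 : δ < 1) (t : ℝ) :
    sawtoothPrim (t + δ) - sawtoothPrim t ≤ δ * (sawtooth t + δ) := by
  have a3 := Int.fract_nonneg (t + δ)
  rw [sawtoothPrim, sawtoothPrim, sawtooth]
  rcases fract_add_cases h0 h1 t with h | h <;> rw [h] at a3 ⊢ <;> nlinarith

lemma le_sawtoothPrim_add_sub {δ : ℝ} (h0 : 0 ≤ δ) (h1 : δ < 1) (t : ℝ) :
    δ * (sawtooth (t + δ) - δ) ≤ sawtoothPrim (t + δ) - sawtoothPrim t := by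
  have a2 := Int.fract_lt_one t
  rw [sawtoothPrim, sawtoothPrim, sawtooth]
  rcases fract_add_cases h0 h1 t with h | h <;> rw [h] <;> nlinarith

lemma hasSum_cos_sawtoothPrim (t : ℝ) :
    HasSum (fun n : ℕ => 1 / (n : ℝ) ^ 2 * Real.cos (2 * Real.pi * (n * t)))
      (2 * Real.pi ^ 2 * sawtoothPrim t + Real.pi ^ 2 / 6) := by
  have h := hasSum_one_div_nat_pow_mul_cos (k := 1) one_ne_zero (x := Int.fract t)
    ⟨Int.fract_nonneg t, (Int.fract_lt_one t).le⟩
  have hB : Polynomial.bernoulli 2 = Polynomial.X ^ 2 - Polynomial.X + Polynomial.C (1 / 6) := by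
    rw [Polynomial.bernoulli_def]
    simp [sum_range_succ, bernoulli_one, bernoulli_two, ← Polynomial.C_mul_X_pow_eq_monomial]
    have hC : Polynomial.C (-1 / 2 : ℚ) * 2 = -1 := by
      rw [← map_ofNat Polynomial.C 2, ← Polynomial.C_mul]
      norm_num
    linear_combination Polynomial.X * hC
  convert h using 1
  · funext n
    have : Real.cos (2 * Real.pi * n * Int.fract t) = Real.cos (2 * Real.pi * (n * t)) := by
      rw [← Real.cos_sub_int_mul_two_pi (2 * Real.pi * (n * t)) (n * ⌊t⌋), Int.fract]
      congr 1
      push_cast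
      ring
    rw [this]
  · rw [mul_one, hB]
    simp [sawtoothPrim]
    ring

/-- A telescoping majorant for `min (1, hδ) / h^{3/2}`; here `r = √h`, `q = √(h-1)`, `s = √δ`. -/
lemma div_cube_le_telescope {r q s E : ℝ} (hr : 0 < r) (hq : 0 ≤ q) (hrq : r ^ 2 = q ^ 2 + 1)
    (hs : 0 < s) (hE : E ≤ 2) (hE' : E ≤ 2 * Real.pi * (r ^ 2 * s ^ 2)) :
    E / r ^ 3 ≤ 16 * Real.pi * (s * (r * s / (1 + r * s)) - s * (q * s / (1 + q * s))) := by
  have hpi := Real.pi_gt_three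
  have hqr : q < r := by nlinarith
  have h1 : s ^ 2 / (2 * r * (1 + r * s) ^ 2) ≤
      s * (r * s / (1 + r * s)) - s * (q * s / (1 + q * s)) := by
    have e : s * (r * s / (1 + r * s)) - s * (q * s / (1 + q * s)) =
        s ^ 2 * (r - q) / ((1 + r * s) * (1 + q * s)) := by
      field_simp
      ring
    have e2 : r - q = 1 / (r + q) := by
      field_simp
      linarith
    rw [e, e2, mul_one_div, div_div]
    apply div_le_div_of_nonneg_left (by positivity) (by positivity)
    have : q * s ≤ r * s := by gcongr
    calc (r + q) * ((1 + r * s) * (1 + q * s)) ≤ (r + r) * ((1 + r * s) * (1 + r * s)) := by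
          gcongr
      _ = _ := by ring
  refine le_trans ?_ (mul_le_mul_of_nonneg_left h1 (by positivity))
  rw [div_le_iff₀ (by positivity)]
  have e3 : 16 * Real.pi * (s ^ 2 / (2 * r * (1 + r * s) ^ 2)) * r ^ 3 =
      8 * Real.pi * (r * s) ^ 2 / (1 + r * s) ^ 2 := by
    field_simp
    ring
  rw [e3, le_div_iff₀ (by positivity)]
  set y := r * s with hy
  have hy0 : 0 < y := by positivity
  rw [← mul_pow, ← hy] at hE'
  rcases le_total y 1 with h | h
  · calc E * (1 + y) ^ 2 ≤ (2 * Real.pi * y ^ 2) * (1 + 1) ^ 2 := by gcongr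
      _ = _ := by ring
  · calc E * (1 + y) ^ 2 ≤ 2 * (y + y) ^ 2 := by gcongr
      _ = 8 * 1 * y ^ 2 := by ring
      _ ≤ _ := by gcongr; linarith

lemma inv_cube_le_telescope {r p : ℝ} (hr : 1 ≤ r) (hp : 0 ≤ p) (hrp : p ^ 2 = r ^ 2 + 1) :
    1 / r ^ 3 ≤ 4 * (1 / r - 1 / p) := by
  have hrp' : r < p := by nlinarith
  have hp' : 0 < p := by linarith
  have e : 1 / r - 1 / p = 1 / (r * p * (p + r)) := by
    field_simp
    linarith
  rw [e, mul_one_div, div_le_div_iff₀ (by positivity) (by positivity)]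
  have h1 : p ^ 2 ≤ 2 * r ^ 2 := by nlinarith
  have h2 : p * r ≤ 2 * r ^ 2 := by nlinarith
  nlinarith [mul_le_mul_of_nonneg_left (add_le_add h1 h2) (by linarith : 0 ≤ r)]

lemma abs_sum_sawtoothPrim_sub_le {δ P Q : ℝ} (hδ : 0 < δ) (hP : 0 ≤ P) (hQ : 0 ≤ Q)
    (a : ℕ → ℝ) (N : ℕ)
    (hV : ∀ h : ℕ, 1 ≤ h → ‖∑ n ∈ range N, unitExp (h * a n)‖ ≤ P * √h + Q / √h) :
    |∑ n ∈ range N, (sawtoothPrim (a n + δ) - sawtoothPrim (a n))| ≤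
      3 * √δ * P + 2 * δ * Q := by
  have hpi := Real.pi_gt_three
  set V := ∑ n ∈ range N, (sawtoothPrim (a n + δ) - sawtoothPrim (a n)) with hVdef
  set u : ℕ → ℝ := fun h => ∑ n ∈ range N, (1 / (h : ℝ) ^ 2 * Real.cos (2 * Real.pi *
    (h * (a n + δ))) - 1 / (h : ℝ) ^ 2 * Real.cos (2 * Real.pi * (h * a n))) with hu
  have hsum : HasSum u (2 * Real.pi ^ 2 * V) := by
    have := hasSum_sum (s := range N) (fun n _ =>
      (hasSum_cos_sawtoothPrim (a n + δ)).sub (hasSum_cos_sawtoothPrim (a n)))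
    have e : 2 * Real.pi ^ 2 * V = ∑ n ∈ range N,
        (2 * Real.pi ^ 2 * sawtoothPrim (a n + δ) + Real.pi ^ 2 / 6 -
          (2 * Real.pi ^ 2 * sawtoothPrim (a n) + Real.pi ^ 2 / 6)) := by
      rw [hVdef, mul_sum]
      refine sum_congr rfl fun n _ => ?_
      ring
    rw [e]
    exact this
  have hs : 0 < √δ := Real.sqrt_pos.2 hδ
  have hss : √δ ^ 2 = δ := Real.sq_sqrt hδ.le
  set φ : ℕ → ℝ := fun h => √δ * (√h * √δ / (1 + √h * √δ)) with hφ
  have hterm : ∀ k : ℕ, |u (k + 1)| ≤ 16 * Real.pi * P * (φ (k + 1) - φ k) +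
      8 * Real.pi * δ * Q * (1 / √((k : ℝ) + 1) - 1 / √((k + 1 : ℕ) + 1 : ℝ)) := by
    intro k
    set r := √((k : ℝ) + 1) with hr
    have hr2 : r ^ 2 = (k : ℝ) + 1 := Real.sq_sqrt (by positivity)
    have hr1 : 1 ≤ r := Real.one_le_sqrt.2 (by linarith [Nat.cast_nonneg (α := ℝ) k])
    have hr0 : 0 < r := by linarith
    set E := ‖unitExp ((k + 1) * δ) - 1‖ with hE
    have hE0 : 0 ≤ E := norm_nonneg _
    have hE2 : E ≤ 2 := norm_unitExp_sub_one_le_two _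
    have hEδ : E ≤ 2 * Real.pi * (r ^ 2 * √δ ^ 2) := by
      rw [hr2, hss]
      refine (norm_unitExp_sub_one_le _).trans_eq ?_
      rw [abs_of_nonneg (by positivity)]
    have hu1 : |u (k + 1)| ≤ 1 / (r ^ 2) ^ 2 * (E * (P * r + Q / r)) := by
      have e : u (k + 1) = 1 / (r ^ 2) ^ 2 * ((unitExp ((k + 1) * δ) - 1) *
          ∑ n ∈ range N, unitExp (((k + 1 : ℕ) : ℝ) * a n)).re := by
        rw [hu, mul_sum, Complex.re_sum, mul_sum]
        refine sum_congr rfl fun n _ => ?_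
        rw [sub_mul, one_mul, ← unitExp_add, Complex.sub_re, unitExp_re, unitExp_re, hr2]
        push_cast
        rw [← mul_sub]
        congr 4
        ring
      rw [e, abs_mul, abs_of_nonneg (by positivity : 0 ≤ 1 / (r ^ 2) ^ 2)]
      refine mul_le_mul_of_nonneg_left ?_ (by positivity)
      refine (Complex.abs_re_le_norm _).trans ?_
      rw [norm_mul]
      refine mul_le_mul_of_nonneg_left ?_ hE0
      have := hV (k + 1) (by omega)
      push_cast at this ⊢
      exact this
    have b1 := div_cube_le_telescope hr0 (Real.sqrt_nonneg k)
      (by rw [hr2, Real.sq_sqrt (by positivity)]) hs hE2 hEδ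
    have b2 := inv_cube_le_telescope hr1 (Real.sqrt_nonneg ((k + 1 : ℕ) + 1 : ℝ))
      (by rw [hr2, Real.sq_sqrt (by positivity)]; push_cast; ring)
    have e1 : 1 / (r ^ 2) ^ 2 * (E * (P * r + Q / r)) =
        P * (E / r ^ 3) + Q * (E / r ^ 2) * (1 / r ^ 3) := by
      field_simp
    have b3 : E / r ^ 2 ≤ 2 * Real.pi * δ := by
      rw [div_le_iff₀ (by positivity)]
      rw [hss] at hEδ
      linarith
    have b4 : Q * (E / r ^ 2) * (1 / r ^ 3) ≤ Q * (2 * Real.pi * δ) *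
        (4 * (1 / r - 1 / √((k + 1 : ℕ) + 1 : ℝ))) := by
      gcongr
    have b5 := mul_le_mul_of_nonneg_left b1 hP
    have e2 : φ (k + 1) - φ k =
        √δ * (r * √δ / (1 + r * √δ)) - √δ * (√k * √δ / (1 + √k * √δ)) := by
      simp only [hφ, hr]; push_cast; ring
    rw [e2]
    rw [e1] at hu1
    linarith
  have hu0 : u 0 = 0 := by simp [hu]
  have hpart : ∀ H : ℕ, |∑ h ∈ range H, u h| ≤ 16 * Real.pi * P * √δ + 8 * Real.pi * δ * Q := by
    intro H
    rcases Nat.eq_zero_or_pos H with rfl | hH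
    · simp; positivity
    obtain ⟨K, rfl⟩ : ∃ K, H = K + 1 := ⟨H - 1, by omega⟩
    rw [sum_range_succ', hu0, add_zero]
    refine (abs_sum_le_sum_abs _ _).trans ((sum_le_sum fun k _ => hterm k).trans ?_)
    rw [sum_add_distrib, ← mul_sum, ← mul_sum, sum_range_sub φ K,
      sum_range_sub' (fun k : ℕ => 1 / √((k : ℝ) + 1)) K]
    have c1 : φ K - φ 0 ≤ √δ := by
      have : φ 0 = 0 := by simp [hφ]
      rw [this, sub_zero]
      have : √K * √δ / (1 + √K * √δ) ≤ 1 := by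
        rw [div_le_one (by positivity)]; linarith
      calc φ K ≤ √δ * 1 := mul_le_mul_of_nonneg_left this hs.le
        _ = _ := mul_one _
    have c2 : 1 / √(((0 : ℕ) : ℝ) + 1) - 1 / √((K : ℝ) + 1) ≤ 1 := by
      have : 0 ≤ 1 / √((K : ℝ) + 1) := by positivity
      simp only [Nat.cast_zero, zero_add, Real.sqrt_one, div_one]
      linarith
    have c3 := mul_le_mul_of_nonneg_left c1 (by positivity : 0 ≤ 16 * Real.pi * P)
    have c4 := mul_le_mul_of_nonneg_left c2 (by positivity : 0 ≤ 8 * Real.pi * δ * Q)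
    linarith
  have hlim := le_of_tendsto (hsum.tendsto_sum_nat.abs) (Eventually.of_forall hpart)
  rw [abs_mul, abs_of_pos (by positivity)] at hlim
  have h2 : Real.pi * |V| ≤ 8 * P * √δ + 4 * δ * Q := by
    have : 2 * Real.pi * (Real.pi * |V|) ≤ 2 * Real.pi * (8 * P * √δ + 4 * δ * Q) := by
      linarith
    exact le_of_mul_le_mul_left this (by positivity)
  have h3 : 3 * |V| ≤ Real.pi * |V| := by gcongr
  have : 0 ≤ P * √δ := by positivity
  have : 0 ≤ δ * Q := by positivity
  linarith

/-- The sawtooth sum estimate for sequences with controlled second differences. -/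
lemma abs_sum_sawtooth_le {l : ℝ} (hl : 0 < l) (a : ℕ → ℝ) (N : ℕ)
    (h : ∀ n < N, l ≤ (a (n + 2) - a (n + 1)) - (a (n + 1) - a n) ∧
      (a (n + 2) - a (n + 1)) - (a (n + 1) - a n) ≤ 24 * l) :
    |∑ n ∈ range N, sawtooth (a n)| ≤ 600 * (N * l ^ (1 / 3 : ℝ) + 1 / √l) := by
  have hsl : 0 < √l := Real.sqrt_pos.2 hl
  rcases le_or_gt 1 l with hl1 | hl1
  · have h1 : |∑ n ∈ range N, sawtooth (a n)| ≤ N := by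
      refine (abs_sum_le_sum_abs _ _).trans ((sum_le_sum fun n _ =>
        (abs_sawtooth_le (a n)).trans (by norm_num : (1 / 2 : ℝ) ≤ 1)).trans ?_)
      simp
    have h2 : (1 : ℝ) ≤ l ^ (1 / 3 : ℝ) := Real.one_le_rpow hl1 (by norm_num)
    have h3 : (N : ℝ) * 1 ≤ N * l ^ (1 / 3 : ℝ) := by gcongr
    have h4 : 0 ≤ 1 / √l := by positivity
    have h5 : (0 : ℝ) ≤ N := by positivity
    linarith
  set δ := l ^ (1 / 3 : ℝ) with hδdef
  have hδ : 0 < δ := Real.rpow_pos_of_pos hl _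
  have hδ1 : δ < 1 := Real.rpow_lt_one hl.le hl1 (by norm_num)
  have hδ3 : δ ^ 3 = l := by
    rw [hδdef, ← Real.rpow_natCast, ← Real.rpow_mul hl.le]; norm_num
  set s := √δ with hsdef
  have hs : 0 < s := Real.sqrt_pos.2 hδ
  have hs2 : s ^ 2 = δ := Real.sq_sqrt hδ.le
  have hs3 : √l = s ^ 3 := by
    rw [Real.sqrt_eq_iff_mul_self_eq hl.le (by positivity), ← hδ3, ← hs2]; ring
  have hV : ∀ b : ℕ → ℝ, (∀ n < N, l ≤ (b (n + 2) - b (n + 1)) - (b (n + 1) - b n) ∧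
      (b (n + 2) - b (n + 1)) - (b (n + 1) - b n) ≤ 24 * l) → ∀ k : ℕ, 1 ≤ k →
      ‖∑ n ∈ range N, unitExp (k * b n)‖ ≤ (168 * N * √l) * √k + (14 / √l) / √k := by
    intro b hb k hk
    have hk0 : (0 : ℝ) < k := by exact_mod_cast hk
    have := norm_sum_unitExp_le (l := k * l) (L := k * (24 * l)) (by positivity)
      (fun n => k * b n) N (fun n hn => by
        have := hb n hn
        constructor
        · nlinarith
        · nlinarith)
    refine this.trans_eq ?_
    have hsk : 0 < √k := Real.sqrt_pos.2 hk0
    rw [Real.sqrt_mul hk0.le]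
    have e1 : √(k : ℝ) ^ 2 = k := Real.sq_sqrt hk0.le
    have e2 : √l ^ 2 = l := Real.sq_sqrt hl.le
    rw [← sub_eq_zero]
    set w := √l
    set v := √(k : ℝ)
    rw [← e1, ← e2]
    field_simp
    ring
  have hP : (0 : ℝ) ≤ 168 * N * √l := by positivity
  have hQ : 0 ≤ 14 / √l := by positivity
  have up := abs_sum_sawtoothPrim_sub_le hδ hP hQ (fun n => a n - δ) N
    (hV _ (fun n hn => by have := h n hn; constructor <;> linarith))
  have lo := abs_sum_sawtoothPrim_sub_le hδ hP hQ a N (hV a h)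
  have up1 : δ * (∑ n ∈ range N, sawtooth (a n) - N * δ) ≤
      ∑ n ∈ range N, (sawtoothPrim (a n - δ + δ) - sawtoothPrim (a n - δ)) := by
    have : δ * (∑ n ∈ range N, sawtooth (a n) - N * δ) =
        ∑ n ∈ range N, δ * (sawtooth (a n - δ + δ) - δ) := by
      simp [← mul_sum, sum_sub_distrib]
    rw [this]
    exact sum_le_sum fun n _ => le_sawtoothPrim_add_sub hδ.le hδ1 _
  have lo1 : ∑ n ∈ range N, (sawtoothPrim (a n + δ) - sawtoothPrim (a n)) ≤
      δ * (∑ n ∈ range N, sawtooth (a n) + N * δ) := by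
    have : δ * (∑ n ∈ range N, sawtooth (a n) + N * δ) =
        ∑ n ∈ range N, δ * (sawtooth (a n) + δ) := by
      simp [← mul_sum, sum_add_distrib]
    rw [this]
    exact sum_le_sum fun n _ => sawtoothPrim_add_sub_le hδ.le hδ1 _
  have e : 3 * √δ * (168 * N * √l) + 2 * δ * (14 / √l) =
      δ * (504 * (N * δ) + 28 * (1 / √l)) := by
    rw [hs3, ← hsdef, ← hs2]
    field_simp
    ring
  rw [e] at up lo
  have hb := (abs_le.1 up).2
  have hc := (abs_le.1 lo).1
  have up2 := le_of_mul_le_mul_left (up1.trans hb) hδ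
  have lo2 : -(504 * (N * δ) + 28 * (1 / √l)) ≤ ∑ n ∈ range N, sawtooth (a n) + N * δ := by
    apply le_of_mul_le_mul_left _ hδ
    linarith
  have : 0 ≤ N * δ := by positivity
  have : 0 ≤ 1 / √l := by positivity
  rw [abs_le]
  constructor <;> linarith

lemma abs_sum_sawtooth_block_le {A b : ℝ} (hA : 0 < A) (hb : 0 ≤ b) (hb1 : b ≤ 1) (c : ℝ)
    {K N : ℕ} (hK : 1 ≤ K) (hN : N ≤ K) :
    |∑ n ∈ range N, sawtooth (A / ((K + n : ℕ) + b) + c)| ≤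
      2400 * (A ^ (1 / 3 : ℝ) + K * √K / √A) := by
  have hK1 : (1 : ℝ) ≤ K := by exact_mod_cast hK
  have hK0 : (0 : ℝ) < K := by linarith
  have hsA : 0 < √A := Real.sqrt_pos.2 hA
  set l := A / (12 * K ^ 3) with hl
  have hl0 : 0 < l := by positivity
  have key := abs_sum_sawtooth_le hl0 (fun n => A / ((K + n : ℕ) + b) + c) N (by
    intro n hn
    have hnK : (n : ℝ) + 1 ≤ K := by exact_mod_cast (by omega : n + 1 ≤ K)
    have hn0 : (0 : ℝ) ≤ n := by positivity
    set u : ℝ := K + n + b with hu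
    have hu0 : 0 < u := by positivity
    have e : (A / ((K + (n + 2) : ℕ) + b) + c - (A / ((K + (n + 1) : ℕ) + b) + c)) -
        (A / ((K + (n + 1) : ℕ) + b) + c - (A / ((K + n : ℕ) + b) + c)) =
        2 * A / (u * (u + 1) * (u + 2)) := by
      have e0 : ((K + n : ℕ) : ℝ) + b = u := by push_cast; ring
      have e1 : ((K + (n + 1) : ℕ) : ℝ) + b = u + 1 := by push_cast; ring
      have e2 : ((K + (n + 2) : ℕ) : ℝ) + b = u + 2 := by push_cast; ring
      rw [e0, e1, e2]
      field_simp
      ring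
    simp only [e]
    have hu2 : u ≤ 2 * K := by linarith
    have huK : (K : ℝ) ≤ u := by linarith
    constructor
    · have : l = 2 * A / (2 * K * (3 * K) * (4 * K)) := by rw [hl]; field_simp; norm_num
      rw [this]
      apply div_le_div_of_nonneg_left (by positivity) (by positivity)
      gcongr <;> linarith
    · have : 24 * l = 2 * A / (K * K * K) := by rw [hl]; field_simp; norm_num
      rw [this]
      apply div_le_div_of_nonneg_left (by positivity) (by positivity)
      gcongr <;> linarith)
  refine key.trans ?_
  have hNK : (N : ℝ) ≤ K := by exact_mod_cast hN
  have h1 : N * l ^ (1 / 3 : ℝ) ≤ A ^ (1 / 3 : ℝ) := by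
    calc N * l ^ (1 / 3 : ℝ) ≤ K * (A / K ^ 3) ^ (1 / 3 : ℝ) := by
          have : l ≤ A / K ^ 3 := by
            apply div_le_div_of_nonneg_left hA.le (by positivity)
            nlinarith [pow_pos hK0 3]
          gcongr
      _ = A ^ (1 / 3 : ℝ) := by
          rw [Real.div_rpow hA.le (by positivity), ← Real.rpow_natCast (K : ℝ) 3,
            ← Real.rpow_mul hK0.le]
          norm_num
          field_simp
  have h2 : 1 / √l ≤ 4 * (K * √K / √A) := by
    have hsK : 0 < √(K : ℝ) := Real.sqrt_pos.2 hK0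
    have e1 : √(K : ℝ) ^ 2 = K := Real.sq_sqrt hK0.le
    have e2 : √A ^ 2 = A := Real.sq_sqrt hA.le
    have : √A / (4 * (K * √K)) ≤ √l := by
      apply Real.le_sqrt_of_sq_le
      rw [div_pow, e2, mul_pow, mul_pow, e1, hl]
      apply div_le_div_of_nonneg_left hA.le (by positivity)
      nlinarith [pow_pos hK0 3]
    calc 1 / √l ≤ 1 / (√A / (4 * (K * √K))) :=
          div_le_div_of_nonneg_left zero_le_one (by positivity) this
      _ = _ := by field_simp
  have h3 : 0 ≤ A ^ (1 / 3 : ℝ) := by positivity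
  linarith

lemma abs_sum_sawtooth_Icc_le_natLog {A b : ℝ} (hA : 0 < A) (hb : 0 ≤ b) (hb1 : b ≤ 1) (c : ℝ)
    (N : ℕ) :
    |∑ n ∈ Icc 1 N, sawtooth (A / (n + b) + c)| ≤
      2400 * (A ^ (1 / 3 : ℝ) * (Nat.log 2 N + 1) + 2 * (N * √N / √A)) := by
  induction N using Nat.strong_induction_on with
  | _ N ih =>
    rcases Nat.eq_zero_or_pos N with rfl | hN
    · simp; positivity
    have hsplit : ∑ n ∈ Icc 1 N, sawtooth (A / (n + b) + c) =
        ∑ n ∈ Icc 1 (N / 2), sawtooth (A / (n + b) + c) +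
        ∑ n ∈ range (N - N / 2), sawtooth (A / ((N / 2 + 1 + n : ℕ) + b) + c) := by
      have e1 : Icc 1 N = Ico 1 (N + 1) := by ext; simp
      have e2 : Icc 1 (N / 2) = Ico 1 (N / 2 + 1) := by ext; simp
      rw [e1, e2, ← sum_Ico_consecutive _ (by omega : 1 ≤ N / 2 + 1) (by omega : N / 2 + 1 ≤ N + 1),
        sum_Ico_eq_sum_range _ (N / 2 + 1), (by omega : N + 1 - (N / 2 + 1) = N - N / 2)]
    have h1 := ih (N / 2) (by omega)
    have h2 := abs_sum_sawtooth_block_le hA hb hb1 c (K := N / 2 + 1) (N := N - N / 2)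
      (by omega) (by omega)
    rw [hsplit]
    refine (abs_add_le _ _).trans ?_
    have hsA : 0 < √A := Real.sqrt_pos.2 hA
    have hA3 : 0 ≤ A ^ (1 / 3 : ℝ) := by positivity
    have h4 : ((N / 2 + 1 : ℕ) : ℝ) * √((N / 2 + 1 : ℕ) : ℝ) / √A ≤ N * √N / √A := by
      have : ((N / 2 + 1 : ℕ) : ℝ) ≤ N := by exact_mod_cast (by omega : N / 2 + 1 ≤ N)
      gcongr
    have h5 : 2 * (((N / 2 : ℕ) : ℝ) * √((N / 2 : ℕ) : ℝ) / √A) ≤ N * √N / √A := by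
      have a1 : ((N / 2 : ℕ) : ℝ) ≤ N := by exact_mod_cast (by omega : N / 2 ≤ N)
      have a2 : 2 * ((N / 2 : ℕ) : ℝ) ≤ N := by exact_mod_cast (by omega : 2 * (N / 2) ≤ N)
      calc 2 * (((N / 2 : ℕ) : ℝ) * √((N / 2 : ℕ) : ℝ) / √A)
          = (2 * ((N / 2 : ℕ) : ℝ)) * √((N / 2 : ℕ) : ℝ) / √A := by ring
        _ ≤ _ := by gcongr
    rcases Nat.lt_or_ge N 2 with h | h
    · obtain rfl : N = 1 := by omega
      norm_num at h1 h2 h4 h5 ⊢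
      linarith [show 0 ≤ (√A)⁻¹ by positivity]
    · have h6 : (Nat.log 2 (N / 2) : ℝ) + 1 = Nat.log 2 N := by
        exact_mod_cast (Nat.log_of_one_lt_of_le one_lt_two h).symm
      rw [h6] at h1
      linarith

/-- The sawtooth sum over a hyperbola. -/
lemma abs_sum_sawtooth_Icc_le {A b x : ℝ} (hA : 0 < A) (hb : 0 ≤ b) (hb1 : b ≤ 1) (c : ℝ)
    {N : ℕ} (hx : 1 ≤ Real.log x) (hNx : N ≤ x) :
    |∑ n ∈ Icc 1 N, sawtooth (A / (n + b) + c)| ≤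
      7200 * (A ^ (1 / 3 : ℝ) * Real.log x + N * √N / √A) := by
  refine (abs_sum_sawtooth_Icc_le_natLog hA hb hb1 c N).trans ?_
  have h1 : (Nat.log 2 N : ℝ) ≤ 2 * Real.log x := by
    rcases Nat.eq_zero_or_pos N with rfl | hN
    · simp; linarith
    have h2 : (2 : ℝ) ^ Nat.log 2 N ≤ N := by exact_mod_cast Nat.pow_log_le_self 2 hN.ne'
    have h3 := Real.log_le_log (by positivity) (h2.trans hNx)
    rw [Real.log_pow] at h3
    have h4 := Real.log_two_gt_d9
    nlinarith [Nat.cast_nonneg (α := ℝ) (Nat.log 2 N)]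
  have hA3 : 0 ≤ A ^ (1 / 3 : ℝ) := by positivity
  have h5 : A ^ (1 / 3 : ℝ) * (Nat.log 2 N + 1) ≤ A ^ (1 / 3 : ℝ) * (3 * Real.log x) := by
    gcongr
    linarith
  have h6 : 0 ≤ N * √N / √A := by positivity
  linarith

/-- The weight `μ(d)² / d`. -/
noncomputable def sqfreeWeight (d : ℕ) : ℝ := (ArithmeticFunction.moebius d : ℝ) ^ 2 / d

lemma sqfreeWeight_nonneg (d : ℕ) : 0 ≤ sqfreeWeight d := by
  rw [sqfreeWeight]; positivity

lemma sqfreeWeight_le (d : ℕ) : sqfreeWeight d ≤ 1 / d := by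
  rw [sqfreeWeight]
  have h : |(ArithmeticFunction.moebius d : ℝ)| ≤ 1 := by
    exact_mod_cast ArithmeticFunction.abs_moebius_le_one (n := d)
  have h2 : (ArithmeticFunction.moebius d : ℝ) ^ 2 ≤ 1 := (sq_le_one_iff_abs_le_one _).2 h
  gcongr

lemma dedekindPsi_div (m : ℕ) :
    dedekindPsi m / m = ∑ d ∈ m.divisors, sqfreeWeight d := by
  rcases Nat.eq_zero_or_pos m with rfl | hm
  · simp
  rw [dedekindPsi, ← Nat.sum_div_divisors m sqfreeWeight, sum_div]
  refine sum_congr rfl fun d hd => ?_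
  have hdvd := Nat.dvd_of_mem_divisors hd
  have hd0 : (d : ℝ) ≠ 0 := by
    have := Nat.pos_of_mem_divisors hd
    positivity
  have hm0 : (m : ℝ) ≠ 0 := by positivity
  rw [sqfreeWeight, Nat.cast_div hdvd hd0]
  field_simp

lemma dedekindPsi_div_nonneg (m : ℕ) : 0 ≤ dedekindPsi m / m := by
  rw [dedekindPsi_div]
  exact sum_nonneg fun d _ => sqfreeWeight_nonneg d

lemma sum_Icc_one_div_le (m : ℕ) : ∑ d ∈ Icc 1 m, (1 : ℝ) / d ≤ 1 + Real.log m := by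
  have := harmonic_le_one_add_log m
  rw [harmonic_eq_sum_Icc] at this
  push_cast at this
  simpa using this

lemma dedekindPsi_div_le (m : ℕ) : dedekindPsi m / m ≤ 1 + Real.log m := by
  rw [dedekindPsi_div]
  refine le_trans ?_ (sum_Icc_one_div_le m)
  refine (sum_le_sum fun d _ => sqfreeWeight_le d).trans ?_
  apply sum_le_sum_of_subset_of_nonneg
  · intro d hd
    rw [mem_Icc]
    exact ⟨Nat.pos_of_mem_divisors hd, Nat.divisor_le hd⟩
  · intros; positivity

lemma log_telescope {m : ℕ} (hm : 1 ≤ m) :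
    (1 + Real.log m) / (m * (m + 1)) ≤
      (2 + Real.log m) / m - (2 + Real.log (m + 1)) / (m + 1) := by
  have hm0 : (0 : ℝ) < m := by exact_mod_cast hm
  have h1 : Real.log (m + 1) - Real.log m ≤ 1 / m := by
    rw [← Real.log_div (by positivity) (by positivity)]
    refine (Real.log_le_sub_one_of_pos (by positivity)).trans_eq ?_
    field_simp
    ring
  have e : (2 + Real.log m) / m - (2 + Real.log (m + 1)) / (m + 1) - (1 + Real.log m) / (m * (m + 1))
      = (1 / m - (Real.log (m + 1) - Real.log m)) / (m + 1) := by
    field_simp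
    ring
  have : 0 ≤ (1 / m - (Real.log (m + 1) - Real.log m)) / (m + 1) := by
    apply div_nonneg <;> linarith
  linarith

/-- The series `∑ Ψ(m) / (m²(m+1))` converges, with tail beyond `R` of size `O(log R / R)`. -/
lemma tsum_dedekindPsi_tail (R : ℕ) :
    0 ≤ (∑' m : ℕ, dedekindPsi m / (m ^ 2 * (m + 1))) -
        ∑ m ∈ Icc 1 R, dedekindPsi m / m / (m * (m + 1)) ∧
      (∑' m : ℕ, dedekindPsi m / (m ^ 2 * (m + 1))) -
        ∑ m ∈ Icc 1 R, dedekindPsi m / m / (m * (m + 1)) ≤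
      (2 + Real.log (R + 1)) / (R + 1) := by
  have e0 : ∀ m : ℕ, dedekindPsi m / (m ^ 2 * (m + 1)) = dedekindPsi m / m / (m * (m + 1)) := by
    intro m
    rw [div_div]
    congr 1
    ring
  simp_rw [e0]
  set t : ℕ → ℝ := fun m => dedekindPsi m / m / (m * (m + 1)) with ht
  have ht0 : ∀ m, 0 ≤ t m := fun m => div_nonneg (dedekindPsi_div_nonneg m) (by positivity)
  have hpart : ∀ R K : ℕ, ∑ m ∈ range K, t m ≤
      ∑ m ∈ Icc 1 R, t m + (2 + Real.log (R + 1)) / (R + 1) := by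
    intro R K
    have h1 : ∀ j : ℕ, ∑ m ∈ Icc 1 (R + j), t m ≤ ∑ m ∈ Icc 1 R, t m +
        (2 + Real.log (R + 1)) / (R + 1) - (2 + Real.log (R + j + 1)) / (R + j + 1) := by
      intro j
      induction j with
      | zero => simp
      | succ j ih =>
        rw [← add_assoc, sum_Icc_succ_top (by omega)]
        have h2 := log_telescope (m := R + j + 1) (by omega)
        have h3 : t (R + j + 1) ≤ (1 + Real.log (R + j + 1 : ℕ)) /
            ((R + j + 1 : ℕ) * ((R + j + 1 : ℕ) + 1)) := by
          simp only [ht]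
          gcongr
          exact dedekindPsi_div_le _
        push_cast at h2 h3 ⊢
        rw [← add_assoc]
        linarith
    have h4 : ∑ m ∈ range K, t m ≤ ∑ m ∈ Icc 1 (R + K), t m := by
      have : t 0 = 0 := by simp [ht]
      have h5 : ∑ m ∈ range K, t m ≤ ∑ m ∈ range (R + K + 1), t m := by
        apply sum_le_sum_of_subset_of_nonneg
        · intro m; simp; omega
        · intros; exact ht0 _
      rw [sum_range_succ', this, add_zero] at h5
      have e : ∑ m ∈ Icc 1 (R + K), t m = ∑ k ∈ range (R + K), t (k + 1) := by
        have : Icc 1 (R + K) = Ico 1 (R + K + 1) := by ext; simp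
        rw [this, sum_Ico_eq_sum_range]
        simp [add_comm]
      rw [e]
      exact h5
    have h6 := h1 K
    have h7 : 0 ≤ (2 + Real.log (R + K + 1)) / (R + K + 1) := by
      have : 0 ≤ Real.log ((R : ℝ) + K + 1) := Real.log_nonneg (by
        have : (0 : ℝ) ≤ R + K := by positivity
        linarith)
      positivity
    linarith
  have hsum : Summable t := summable_of_sum_range_le ht0 (hpart R)
  constructor
  · exact sub_nonneg.2 (hsum.sum_le_tsum _ fun m _ => ht0 m)
  · have := hsum.hasSum.tendsto_sum_nat
    linarith [le_of_tendsto this (Eventually.of_forall (hpart R))]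

/-- Grouping the `n ≤ x` by the value of `⌊x/n⌋`. -/
lemma sum_floor_div_split (g : ℕ → ℝ) {x : ℝ} (hx : 0 ≤ x) (M : ℕ) :
    ∑ n ∈ Icc 1 ⌊x⌋₊, g ⌊x / n⌋₊ = ∑ n ∈ Icc 1 ⌊x / (M + 1)⌋₊, g ⌊x / n⌋₊ +
      ∑ m ∈ Icc 1 M, g m * ((⌊x / m⌋₊ : ℝ) - ⌊x / (m + 1)⌋₊) := by
  induction M with
  | zero => simp
  | succ M ih =>
    rw [ih, sum_Icc_succ_top (by omega)]
    have hle : ⌊x / ((M : ℝ) + 1 + 1)⌋₊ ≤ ⌊x / ((M : ℝ) + 1)⌋₊ := by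
      apply Nat.floor_mono
      gcongr
      linarith
    have h1 : ∑ n ∈ Icc 1 ⌊x / ((M : ℝ) + 1)⌋₊, g ⌊x / n⌋₊ =
        ∑ n ∈ Icc 1 ⌊x / ((M : ℝ) + 1 + 1)⌋₊, g ⌊x / n⌋₊ +
        ∑ n ∈ Ioc ⌊x / ((M : ℝ) + 1 + 1)⌋₊ ⌊x / ((M : ℝ) + 1)⌋₊, g ⌊x / n⌋₊ := by
      have e : ∀ k : ℕ, Icc 1 k = Ioc 0 k := fun k => by ext; simp; omega
      rw [e, e, sum_Ioc_consecutive _ (Nat.zero_le _) hle]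
    have h2 : ∑ n ∈ Ioc ⌊x / ((M : ℝ) + 1 + 1)⌋₊ ⌊x / ((M : ℝ) + 1)⌋₊, g ⌊x / n⌋₊ =
        g (M + 1) * ((⌊x / ((M : ℝ) + 1)⌋₊ : ℝ) - ⌊x / ((M : ℝ) + 1 + 1)⌋₊) := by
      rw [sum_congr rfl (g := fun _ => g (M + 1)), sum_const, Nat.card_Ioc, nsmul_eq_mul,
        Nat.cast_sub hle, mul_comm]
      intro n hn
      rw [mem_Ioc] at hn
      have hn0 : (0 : ℝ) < n := by exact_mod_cast (by omega : 0 < n)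
      congr 1
      rw [Nat.floor_eq_iff (by positivity)]
      have h3 := (Nat.floor_lt (by positivity)).1 hn.1
      have h4 := (Nat.le_floor_iff (by positivity)).1 hn.2
      rw [div_lt_iff₀ (by positivity)] at h3
      rw [le_div_iff₀ (by positivity)] at h4
      rw [le_div_iff₀ hn0, div_lt_iff₀ hn0]
      push_cast
      constructor <;> linarith
    rw [h1, h2]
    push_cast
    ring

lemma natFloor_eq_sub_sawtooth {t : ℝ} (ht : 0 ≤ t) : (⌊t⌋₊ : ℝ) = t - sawtooth t - 1 / 2 := by
  rw [natCast_floor_eq_intCast_floor ht, sawtooth, Int.fract]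
  ring

/-- Detecting divisibility of `⌊y⌋` by `d` with the sawtooth function. -/
lemma indicator_dvd_floor {y : ℝ} (hy : 0 ≤ y) {d : ℕ} (hd : 1 ≤ d) :
    (if d ∣ ⌊y⌋₊ then (1 : ℝ) else 0) =
      1 / d - (sawtooth (y / d) - sawtooth (y / d + -(1 / d))) := by
  have hd0 : (0 : ℝ) < d := by exact_mod_cast hd
  set k := ⌊y⌋₊ with hk
  have h1 : (k : ℝ) ≤ y := Nat.floor_le hy
  have h2 : y < k + 1 := Nat.lt_floor_add_one y
  have h3 : (d : ℝ) * (k / d : ℕ) + (k % d : ℕ) = k := by exact_mod_cast Nat.div_add_mod k d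
  have h4 : ((k % d : ℕ) : ℝ) + 1 ≤ d := by exact_mod_cast Nat.mod_lt k hd
  generalize k / d = q at h3
  have f1 : ⌊y / d⌋ = (q : ℤ) := by
    rw [Int.floor_eq_iff, le_div_iff₀ hd0, div_lt_iff₀ hd0]
    push_cast
    constructor <;> nlinarith [Nat.cast_nonneg (α := ℝ) (k % d)]
  have e : y / d + -(1 / d) = (y - 1) / d := by ring
  rw [e]
  split_ifs with h
  · have h5 : k % d = 0 := Nat.mod_eq_zero_of_dvd h
    rw [h5, Nat.cast_zero] at h3
    have f2 : ⌊(y - 1) / d⌋ = (q : ℤ) - 1 := by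
      rw [Int.floor_eq_iff, le_div_iff₀ hd0, div_lt_iff₀ hd0]
      push_cast
      have : (1 : ℝ) ≤ d := by exact_mod_cast hd
      constructor <;> nlinarith
    rw [sawtooth, sawtooth, Int.fract, Int.fract, f1, f2]
    push_cast
    ring
  · have h5 : (1 : ℝ) ≤ (k % d : ℕ) := by
      exact_mod_cast Nat.pos_of_ne_zero fun h' => h (Nat.dvd_of_mod_eq_zero h')
    have f2 : ⌊(y - 1) / d⌋ = (q : ℤ) := by
      rw [Int.floor_eq_iff, le_div_iff₀ hd0, div_lt_iff₀ hd0]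
      push_cast
      constructor <;> nlinarith
    rw [sawtooth, sawtooth, Int.fract, Int.fract, f1, f2]
    ring

lemma sum_divisors_eq_sum_Icc (w : ℕ → ℝ) {m R : ℕ} (hm : 1 ≤ m) (hR : m ≤ R) :
    ∑ d ∈ m.divisors, w d = ∑ d ∈ Icc 1 R, w d * (if d ∣ m then 1 else 0) := by
  simp_rw [mul_ite, mul_one, mul_zero]
  rw [← sum_filter]
  refine sum_congr ?_ fun _ _ => rfl
  ext d
  simp only [Nat.mem_divisors, mem_filter, mem_Icc]
  constructor
  · rintro ⟨h, h0⟩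
    exact ⟨⟨Nat.pos_of_dvd_of_pos h hm, (Nat.le_of_dvd hm h).trans hR⟩, h⟩
  · rintro ⟨_, h⟩
    exact ⟨h, by omega⟩

lemma sum_Icc_dvd (h : ℕ → ℝ) (M : ℕ) {d : ℕ} (hd : 1 ≤ d) :
    ∑ m ∈ Icc 1 M, (if d ∣ m then 1 else 0) * h m = ∑ k ∈ Icc 1 (M / d), h (d * k) := by
  simp_rw [ite_mul, one_mul, zero_mul]
  rw [← sum_filter]
  symm
  refine sum_bij (fun k _ => d * k) ?_ ?_ ?_ ?_
  · intro k hk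
    rw [mem_Icc, Nat.le_div_iff_mul_le hd] at hk
    rw [mem_filter, mem_Icc]
    exact ⟨⟨Nat.mul_pos hd hk.1, by linarith⟩, dvd_mul_right _ _⟩
  · intro k _ k' _ hkk
    exact Nat.eq_of_mul_eq_mul_left hd hkk
  · intro m hm
    rw [mem_filter, mem_Icc] at hm
    obtain ⟨⟨h1, h2⟩, k, rfl⟩ := hm
    refine ⟨k, ?_, rfl⟩
    rw [mem_Icc, Nat.le_div_iff_mul_le hd]
    exact ⟨Nat.pos_of_ne_zero (by rintro rfl; simp at h1), by linarith⟩
  · intros; rfl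

lemma sum_divisorSum_mul (w h : ℕ → ℝ) (M : ℕ) :
    ∑ m ∈ Icc 1 M, (∑ d ∈ m.divisors, w d) * h m =
      ∑ d ∈ Icc 1 M, w d * ∑ k ∈ Icc 1 (M / d), h (d * k) := by
  have h1 : ∀ m ∈ Icc 1 M, (∑ d ∈ m.divisors, w d) * h m =
      ∑ d ∈ Icc 1 M, w d * ((if d ∣ m then 1 else 0) * h m) := by
    intro m hm
    rw [mem_Icc] at hm
    rw [sum_divisors_eq_sum_Icc w hm.1 hm.2, sum_mul]
    simp_rw [mul_assoc]
  rw [sum_congr rfl h1, sum_comm]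
  refine sum_congr rfl fun d hd => ?_
  rw [mem_Icc] at hd
  rw [← mul_sum, sum_Icc_dvd h M hd.1]

/-- Multiples of `d` have density `1/d` against any nonincreasing weight. -/
lemma abs_sum_Ioc_dvd_sub_le (v : ℕ → ℝ) (hv : ∀ n, 1 ≤ n → v (n + 1) ≤ v n) (hv0 : ∀ n, 0 ≤ v n)
    {d : ℕ} (hd : 1 ≤ d) {M R : ℕ} (hMR : M ≤ R) :
    |∑ m ∈ Ioc M R, v m * ((if d ∣ m then 1 else 0) - 1 / (d : ℝ))| ≤ v (M + 1) := by
  have hd0 : (0 : ℝ) < d := by exact_mod_cast hd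
  set U : ℕ → ℝ := fun m => ((m / d : ℕ) : ℝ) - m / d with hU
  have hU0 : ∀ m, U m ≤ 0 := fun m => sub_nonpos.2 Nat.cast_div_le
  have hU1 : ∀ m, -1 ≤ U m := by
    intro m
    have h3 : (d : ℝ) * (m / d : ℕ) + (m % d : ℕ) = m := by exact_mod_cast Nat.div_add_mod m d
    have h4 : ((m % d : ℕ) : ℝ) + 1 ≤ d := by exact_mod_cast Nat.mod_lt m hd
    have : (m : ℝ) / d ≤ (m / d : ℕ) + 1 := by
      rw [div_le_iff₀ hd0]; nlinarith
    simp only [hU]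
    linarith
  have hstep : ∀ m, (if d ∣ m + 1 then (1 : ℝ) else 0) - 1 / (d : ℝ) = U (m + 1) - U m := by
    intro m
    simp only [hU]
    rw [Nat.succ_div]
    push_cast
    ring
  have key : v (R + 1) * U R - v (M + 1) * U M - (v (M + 1) - v (R + 1)) ≤
      ∑ m ∈ Ioc M R, v m * ((if d ∣ m then 1 else 0) - 1 / (d : ℝ)) ∧
      ∑ m ∈ Ioc M R, v m * ((if d ∣ m then 1 else 0) - 1 / (d : ℝ)) ≤
      v (R + 1) * U R - v (M + 1) * U M := by
    induction R, hMR using Nat.le_induction with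
    | base => simp
    | succ R hMR ih =>
      rw [sum_Ioc_succ_top (by omega), hstep]
      have h1 := hU0 (R + 1)
      have h2 := hU1 (R + 1)
      have h3 : v (R + 1 + 1) ≤ v (R + 1) := hv _ (by omega)
      constructor <;> nlinarith
  have h1 := hU0 R
  have h2 := hU1 R
  have h3 := hU0 M
  have h4 := hU1 M
  have h5 := hv0 (R + 1)
  have h6 := hv0 (M + 1)
  rw [abs_le]
  constructor <;> nlinarith [key.1, key.2]

lemma sum_Icc_one_div_sqrt_le (D : ℕ) : ∑ d ∈ Icc 1 D, 1 / √(d : ℝ) ≤ 2 * √D := by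
  induction D with
  | zero => simp
  | succ D ih =>
    rw [sum_Icc_succ_top (by omega)]
    have h1 : √((D + 1 : ℕ) : ℝ) ^ 2 = D + 1 := by rw [Real.sq_sqrt (by positivity)]; push_cast; rfl
    have h2 : √(D : ℝ) ^ 2 = D := Real.sq_sqrt (by positivity)
    have h3 : 0 < √((D + 1 : ℕ) : ℝ) := Real.sqrt_pos.2 (by positivity)
    have : 1 / √((D + 1 : ℕ) : ℝ) ≤ 2 * √((D + 1 : ℕ) : ℝ) - 2 * √D := by
      rw [div_le_iff₀ h3]
      nlinarith [sq_nonneg (√((D + 1 : ℕ) : ℝ) - √D)]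
    linarith

lemma sum_Ioc_one_div_sq_le {D R : ℕ} (hD : 1 ≤ D) :
    ∑ d ∈ Ioc D R, 1 / (d : ℝ) ^ 2 ≤ 1 / (D : ℝ) := by
  rcases le_total R D with h | h
  · rw [Ioc_eq_empty (by omega)]; simp
  have h1 : ∑ d ∈ Ioc D R, 1 / (d : ℝ) ^ 2 ≤ 1 / (D : ℝ) - 1 / R := by
    induction R, h using Nat.le_induction with
    | base => simp
    | succ R hR ih =>
      rw [sum_Ioc_succ_top (by omega)]
      have hR0 : (0 : ℝ) < R := by exact_mod_cast (by omega : 0 < R)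
      have : 1 / ((R + 1 : ℕ) : ℝ) ^ 2 ≤ 1 / R - 1 / (R + 1 : ℕ) := by
        push_cast
        have e : 1 / (R : ℝ) - 1 / (R + 1) = 1 / (R * (R + 1)) := by field_simp; ring
        rw [e]
        apply div_le_div_of_nonneg_left zero_le_one (by positivity)
        nlinarith
      linarith
  have : (0 : ℝ) ≤ 1 / R := by positivity
  linarith

lemma sum_Icc_one_div_sq_le (R : ℕ) : ∑ d ∈ Icc 1 R, 1 / (d : ℝ) ^ 2 ≤ 2 := by
  have h := sum_Ioc_one_div_sq_le (D := 1) (R := R) le_rfl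
  have hs : Icc 1 R ⊆ insert 1 (Ioc 1 R) := by
    intro m; simp; omega
  refine (sum_le_sum_of_subset_of_nonneg hs (by intros; positivity)).trans ?_
  rw [sum_insert (by simp)]
  norm_num only [Nat.cast_one] at h ⊢
  linarith

lemma sum_Icc_four_thirds_le (R : ℕ) :
    ∑ d ∈ Icc 1 R, 1 / (d : ℝ) ^ (4 / 3 : ℝ) ≤ ∑' d : ℕ, 1 / (d : ℝ) ^ (4 / 3 : ℝ) :=
  (Real.summable_one_div_nat_rpow.2 (by norm_num)).sum_le_tsum _ fun d _ => by positivity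

lemma mul_sqrt_div_sqrt_le {x Y K : ℝ} (hx : 0 < x) (hY : 0 ≤ Y) (hK : 0 ≤ K)
    (h : K ^ 3 ≤ Y ^ 2 * x) : K * √K / √x ≤ Y := by
  rw [div_le_iff₀ (Real.sqrt_pos.2 hx)]
  have h1 : K * √K = √(K ^ 3) := by
    rw [eq_comm, Real.sqrt_eq_iff_mul_self_eq (by positivity) (by positivity)]
    linear_combination (-K ^ 2) * Real.mul_self_sqrt hK
  have h2 : Y * √x = √(Y ^ 2 * x) := by
    rw [Real.sqrt_mul (by positivity), Real.sqrt_sq hY]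
  rw [h1, h2]
  exact Real.sqrt_le_sqrt h

lemma one_div_mul_rpow_third {x : ℝ} (hx : 0 ≤ x) {d : ℕ} (hd : 1 ≤ d) :
    1 / (d : ℝ) * (x / d) ^ (1 / 3 : ℝ) = x ^ (1 / 3 : ℝ) * (1 / (d : ℝ) ^ (4 / 3 : ℝ)) := by
  have hd0 : (0 : ℝ) < d := by exact_mod_cast hd
  have : (d : ℝ) ^ (4 / 3 : ℝ) = d * (d : ℝ) ^ (1 / 3 : ℝ) := by
    rw [show (4 / 3 : ℝ) = 1 + 1 / 3 by norm_num, Real.rpow_add hd0, Real.rpow_one]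
  rw [Real.div_rpow hx hd0.le, this]
  field_simp

/-- The contribution of the small values `m ≤ M` of `⌊x/n⌋`. -/
lemma abs_sum_small_values_sub_le {x Y : ℝ} (hx : 0 < x) (hlog : 1 ≤ Real.log x) (hY : 0 ≤ Y)
    {M : ℕ} (hM : M ≤ x) (hMY : (M : ℝ) ^ 3 ≤ Y ^ 2 * x) :
    |∑ m ∈ Icc 1 M, dedekindPsi m / m * ((⌊x / m⌋₊ : ℝ) - ⌊x / (m + 1)⌋₊) -
      x * ∑ m ∈ Icc 1 M, dedekindPsi m / m / (m * (m + 1))| ≤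
    14400 * (x ^ (1 / 3 : ℝ) * Real.log x * ∑' d : ℕ, 1 / (d : ℝ) ^ (4 / 3 : ℝ) + 2 * Y) := by
  have e : ∑ m ∈ Icc 1 M, dedekindPsi m / m * ((⌊x / m⌋₊ : ℝ) - ⌊x / (m + 1)⌋₊) -
      x * ∑ m ∈ Icc 1 M, dedekindPsi m / m / (m * (m + 1)) =
      -∑ d ∈ Icc 1 M, sqfreeWeight d * ∑ k ∈ Icc 1 (M / d),
        (sawtooth (x / (d * k : ℕ)) - sawtooth (x / ((d * k : ℕ) + 1))) := by
    rw [← sum_divisorSum_mul sqfreeWeight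
      (fun m => sawtooth (x / m) - sawtooth (x / (m + 1))) M, mul_sum, ← sum_sub_distrib,
      ← sum_neg_distrib]
    refine sum_congr rfl fun m hm => ?_
    rw [mem_Icc] at hm
    have hm0 : (0 : ℝ) < m := by exact_mod_cast hm.1
    rw [natFloor_eq_sub_sawtooth (by positivity), natFloor_eq_sub_sawtooth (by positivity),
      ← dedekindPsi_div]
    generalize dedekindPsi m / (m : ℝ) = f
    field_simp
    ring
  rw [e, abs_neg]
  refine (abs_sum_le_sum_abs _ _).trans ?_
  have hterm : ∀ d ∈ Icc 1 M, |sqfreeWeight d * ∑ k ∈ Icc 1 (M / d),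
        (sawtooth (x / (d * k : ℕ)) - sawtooth (x / ((d * k : ℕ) + 1)))| ≤
      14400 * (x ^ (1 / 3 : ℝ) * Real.log x * (1 / (d : ℝ) ^ (4 / 3 : ℝ)) +
        Y * (1 / (d : ℝ) ^ 2)) := by
    intro d hd
    rw [mem_Icc] at hd
    have hd0 : (0 : ℝ) < d := by exact_mod_cast hd.1
    have hd1 : (1 : ℝ) ≤ d := by exact_mod_cast hd.1
    have hKM : ((M / d : ℕ) : ℝ) ≤ M / d := Nat.cast_div_le
    have hKx : ((M / d : ℕ) : ℝ) ≤ x :=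
      hKM.trans ((div_le_self (by positivity) hd1).trans hM)
    have b1 := abs_sum_sawtooth_Icc_le (A := x / d) (b := 0) (by positivity) le_rfl zero_le_one 0
      hlog hKx
    have b2 := abs_sum_sawtooth_Icc_le (A := x / d) (b := 1 / d) (by positivity) (by positivity)
      ((div_le_one hd0).2 hd1) 0 hlog hKx
    have e1 : ∀ k : ℕ, x / d / (k + 0) + 0 = x / (d * k : ℕ) := by
      intro k
      push_cast
      rw [add_zero, add_zero, div_div]
    have e2 : ∀ k : ℕ, x / d / (k + 1 / (d : ℝ)) + 0 = x / ((d * k : ℕ) + 1) := by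
      intro k
      push_cast
      rw [add_zero, div_div]
      congr 1
      field_simp
    simp_rw [e1] at b1
    simp_rw [e2] at b2
    have b3 : ((M / d : ℕ) : ℝ) * √((M / d : ℕ) : ℝ) / √(x / d) ≤ Y / d := by
      have hKd : ((M / d : ℕ) : ℝ) * d ≤ M := by exact_mod_cast Nat.div_mul_le_self M d
      apply mul_sqrt_div_sqrt_le (by positivity) (by positivity) (by positivity)
      have : (((M / d : ℕ) : ℝ) * d) ^ 3 ≤ Y ^ 2 * x := le_trans (by gcongr) hMY
      rw [div_pow, div_mul_div_comm, le_div_iff₀ (by positivity)]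
      calc _ = (((M / d : ℕ) : ℝ) * d) ^ 3 := by ring
        _ ≤ _ := this
    rw [abs_mul, abs_of_nonneg (sqfreeWeight_nonneg d), sum_sub_distrib]
    have b4 := abs_sub (∑ k ∈ Icc 1 (M / d), sawtooth (x / (d * k : ℕ)))
      (∑ k ∈ Icc 1 (M / d), sawtooth (x / ((d * k : ℕ) + 1)))
    have b5 : |∑ k ∈ Icc 1 (M / d), sawtooth (x / (d * k : ℕ)) -
        ∑ k ∈ Icc 1 (M / d), sawtooth (x / ((d * k : ℕ) + 1))| ≤
        14400 * ((x / d) ^ (1 / 3 : ℝ) * Real.log x + Y / d) := by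
      linarith
    calc _ ≤ 1 / (d : ℝ) * (14400 * ((x / d) ^ (1 / 3 : ℝ) * Real.log x + Y / d)) :=
          mul_le_mul (sqfreeWeight_le d) b5 (abs_nonneg _) (by positivity)
      _ = 14400 * (1 / (d : ℝ) * (x / d) ^ (1 / 3 : ℝ) * Real.log x +
          Y * (1 / (d : ℝ) ^ 2)) := by ring
      _ = _ := by rw [one_div_mul_rpow_third hx.le hd.1]; ring
  refine (sum_le_sum hterm).trans ?_
  rw [← mul_sum, sum_add_distrib, ← mul_sum, ← mul_sum]
  have h1 := sum_Icc_four_thirds_le M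
  have h2 := sum_Icc_one_div_sq_le M
  rw [mul_comm 2 Y]
  gcongr

/-- Divisibility of `⌊x/n⌋` by the small `d ≤ D`, on average over `N' < n ≤ N`. -/
lemma abs_sum_dvd_floor_sub_le {x Y : ℝ} (hx : 0 < x) (hlog : 1 ≤ Real.log x) (hY : 0 ≤ Y)
    {D N' N : ℕ} (hN' : N' ≤ N) (hN : N ≤ x) (hNY : (N : ℝ) ^ 3 * D ≤ Y ^ 2 * x) :
    |∑ n ∈ Ioc N' N, ∑ d ∈ Icc 1 D, sqfreeWeight d * (if d ∣ ⌊x / n⌋₊ then 1 else 0) -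
      ((N : ℝ) - N') * ∑ d ∈ Icc 1 D, sqfreeWeight d / d| ≤
    28800 * (x ^ (1 / 3 : ℝ) * Real.log x * ∑' d : ℕ, 1 / (d : ℝ) ^ (4 / 3 : ℝ) + 2 * Y) := by
  have e : ∑ n ∈ Ioc N' N, ∑ d ∈ Icc 1 D, sqfreeWeight d * (if d ∣ ⌊x / n⌋₊ then 1 else 0) -
      ((N : ℝ) - N') * ∑ d ∈ Icc 1 D, sqfreeWeight d / d =
      -∑ d ∈ Icc 1 D, sqfreeWeight d * ∑ n ∈ Ioc N' N,
        (sawtooth (x / n / d) - sawtooth (x / n / d + -(1 / d))) := by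
    rw [sum_comm, mul_sum, ← sum_sub_distrib, ← sum_neg_distrib]
    refine sum_congr rfl fun d hd => ?_
    rw [mem_Icc] at hd
    have : ∑ n ∈ Ioc N' N, (if d ∣ ⌊x / n⌋₊ then (1 : ℝ) else 0) = ((N : ℝ) - N') * (1 / d) -
        ∑ n ∈ Ioc N' N, (sawtooth (x / n / d) - sawtooth (x / n / d + -(1 / d))) := by
      rw [sum_congr rfl fun (n : ℕ) _ =>
        indicator_dvd_floor (y := x / n) (div_nonneg hx.le (Nat.cast_nonneg n)) hd.1,
        sum_sub_distrib, sum_const, Nat.card_Ioc, nsmul_eq_mul, Nat.cast_sub hN']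
    rw [← mul_sum, this]
    ring
  rw [e, abs_neg]
  refine (abs_sum_le_sum_abs _ _).trans ?_
  have hNN : (N' : ℝ) ≤ N := by exact_mod_cast hN'
  have hterm : ∀ d ∈ Icc 1 D, |sqfreeWeight d * ∑ n ∈ Ioc N' N,
        (sawtooth (x / n / d) - sawtooth (x / n / d + -(1 / d)))| ≤
      28800 * (x ^ (1 / 3 : ℝ) * Real.log x * (1 / (d : ℝ) ^ (4 / 3 : ℝ)) +
        N * √N / √x * (1 / √d)) := by
    intro d hd
    rw [mem_Icc] at hd
    have hd0 : (0 : ℝ) < d := by exact_mod_cast hd.1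
    have hb : ∀ (c : ℝ) (K : ℕ), K ≤ N →
        |∑ n ∈ Icc 1 K, sawtooth (x / n / d + c)| ≤
        7200 * ((x / d) ^ (1 / 3 : ℝ) * Real.log x + N * √N / √(x / d)) := by
      intro c K hK
      have hKN : (K : ℝ) ≤ N := by exact_mod_cast hK
      have b1 := abs_sum_sawtooth_Icc_le (A := x / d) (b := 0) (by positivity) le_rfl zero_le_one
        c hlog (hKN.trans hN)
      have e1 : ∀ n : ℕ, x / d / (n + 0) + c = x / n / d + c := by
        intro n
        rw [add_zero, div_right_comm]
      simp_rw [e1] at b1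
      refine b1.trans ?_
      gcongr
    have hsplit : ∀ g : ℕ → ℝ, ∑ n ∈ Ioc N' N, g n = ∑ n ∈ Icc 1 N, g n - ∑ n ∈ Icc 1 N', g n := by
      intro g
      have e : ∀ k : ℕ, Icc 1 k = Ioc 0 k := fun k => by ext; simp; omega
      rw [e, e, ← sum_Ioc_consecutive _ (Nat.zero_le _) hN']
      ring
    have b1 := abs_le.1 (hb 0 N le_rfl)
    have b2 := abs_le.1 (hb 0 N' hN')
    have b3 := abs_le.1 (hb (-(1 / d)) N le_rfl)
    have b4 := abs_le.1 (hb (-(1 / d)) N' hN')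
    simp only [add_zero] at b1 b2
    rw [abs_mul, abs_of_nonneg (sqfreeWeight_nonneg d), sum_sub_distrib, hsplit, hsplit]
    calc _ ≤ 1 / (d : ℝ) * (28800 * ((x / d) ^ (1 / 3 : ℝ) * Real.log x +
            N * √N / √(x / d))) := by
          refine mul_le_mul (sqfreeWeight_le d) ?_ (abs_nonneg _) (by positivity)
          rw [abs_le]
          constructor <;> linarith [b1.1, b1.2, b2.1, b2.2, b3.1, b3.2, b4.1, b4.2]
      _ = 28800 * (1 / (d : ℝ) * (x / d) ^ (1 / 3 : ℝ) * Real.log x +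
          1 / (d : ℝ) * (N * √N / √(x / d))) := by ring
      _ = _ := by
          rw [one_div_mul_rpow_third hx.le hd.1]
          have : 1 / (d : ℝ) * (N * √N / √(x / d)) = N * √N / √x * (1 / √d) := by
            have hs : √(d : ℝ) ^ 2 = d := Real.sq_sqrt hd0.le
            have hs0 : 0 < √(d : ℝ) := Real.sqrt_pos.2 hd0
            have hsx : 0 < √x := Real.sqrt_pos.2 hx
            rw [Real.sqrt_div hx.le]
            field_simp
            linear_combination (N : ℝ) * √N * hs
          rw [this]
          ring
  refine (sum_le_sum hterm).trans ?_
  rw [← mul_sum, sum_add_distrib, ← mul_sum, ← mul_sum]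
  have h1 := sum_Icc_four_thirds_le D
  have h2 := sum_Icc_one_div_sqrt_le D
  have h3 : N * √N / √x * ∑ d ∈ Icc 1 D, 1 / √(d : ℝ) ≤ 2 * Y := by
    refine (mul_le_mul_of_nonneg_left h2 (by positivity)).trans ?_
    have h4 : N * √N * √D ≤ Y * √x := by
      have e1 : N * √N * √D = √((N : ℝ) ^ 3 * D) := by
        rw [eq_comm, Real.sqrt_eq_iff_mul_self_eq (by positivity) (by positivity)]
        have a1 := Real.mul_self_sqrt (Nat.cast_nonneg (α := ℝ) N)
        have a2 := Real.mul_self_sqrt (Nat.cast_nonneg (α := ℝ) D)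
        symm
        calc _ = (N : ℝ) ^ 2 * (√N * √N) * (√D * √D) := by ring
          _ = _ := by rw [a1, a2]; ring
      have e2 : Y * √x = √(Y ^ 2 * x) := by
        rw [Real.sqrt_mul (by positivity), Real.sqrt_sq hY]
      rw [e1, e2]
      exact Real.sqrt_le_sqrt hNY
    have hsx : 0 < √x := Real.sqrt_pos.2 hx
    calc _ = 2 * (N * √N * √D) / √x := by ring
      _ ≤ 2 * (Y * √x) / √x := by gcongr
      _ = _ := by field_simp
  gcongr

/-- The contribution of the large divisors `d > D` of the values `M < m ≤ M'` of `⌊x/n⌋`. -/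
lemma sum_large_divisors_le {x : ℝ} (hx : 0 ≤ x) {D M M' : ℕ} (hD : 1 ≤ D)
    (hM : x ≤ ((M : ℝ) + 1) ^ 2) :
    ∑ m ∈ Ioc M M', (∑ d ∈ m.divisors, if D < d then sqfreeWeight d else 0) *
      ((⌊x / m⌋₊ : ℝ) - ⌊x / (m + 1)⌋₊) ≤ 2 * M' / D := by
  set w : ℕ → ℝ := fun d => if D < d then sqfreeWeight d else 0 with hw
  have hw0 : ∀ d, 0 ≤ w d := by
    intro d
    simp only [hw]
    split_ifs
    exacts [sqfreeWeight_nonneg d, le_rfl]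
  have h1 : ∀ m ∈ Ioc M M', (∑ d ∈ m.divisors, w d) *
      ((⌊x / m⌋₊ : ℝ) - ⌊x / (m + 1)⌋₊) ≤ (∑ d ∈ m.divisors, w d) * 2 := by
    intro m hm
    rw [mem_Ioc] at hm
    refine mul_le_mul_of_nonneg_left ?_ (sum_nonneg fun d _ => hw0 d)
    have hm1 : (M : ℝ) + 1 ≤ m := by exact_mod_cast hm.1
    have hm0 : (0 : ℝ) < m := by linarith [Nat.cast_nonneg (α := ℝ) M]
    have f1 := Nat.floor_le (by positivity : 0 ≤ x / (m : ℝ))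
    have f2 := Nat.lt_floor_add_one (x / ((m : ℝ) + 1))
    have f3 : x / m - x / (m + 1) ≤ 1 := by
      have : x / m - x / (m + 1) = x / (m * (m + 1)) := by field_simp; ring
      rw [this, div_le_one (by positivity)]
      nlinarith
    linarith
  refine (sum_le_sum h1).trans ?_
  have h2 : ∑ m ∈ Ioc M M', (∑ d ∈ m.divisors, w d) * 2 ≤
      ∑ m ∈ Icc 1 M', (∑ d ∈ m.divisors, w d) * 2 := by
    apply sum_le_sum_of_subset_of_nonneg
    · intro m; simp; omega
    · intros
      exact mul_nonneg (sum_nonneg fun d _ => hw0 d) zero_le_two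
  refine h2.trans ?_
  rw [sum_divisorSum_mul w (fun _ => 2)]
  have h3 : ∀ d ∈ Icc 1 M', w d * ∑ k ∈ Icc 1 (M' / d), (2 : ℝ) ≤
      if D < d then 2 * M' * (1 / (d : ℝ) ^ 2) else 0 := by
    intro d hd
    rw [mem_Icc] at hd
    have hd0 : (0 : ℝ) < d := by exact_mod_cast hd.1
    simp only [hw]
    split_ifs
    · rw [sum_const, Nat.card_Icc, nsmul_eq_mul, Nat.add_sub_cancel]
      have : ((M' / d : ℕ) : ℝ) ≤ M' / d := Nat.cast_div_le
      calc _ ≤ 1 / (d : ℝ) * (M' / d * 2) := by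
            refine mul_le_mul (sqfreeWeight_le d) ?_ (by positivity) (by positivity)
            gcongr
        _ = _ := by field_simp
    · simp
  refine (sum_le_sum h3).trans ?_
  rw [← sum_filter]
  have h4 : (Icc 1 M').filter (fun d => D < d) = Ioc D M' := by
    ext; simp; omega
  rw [h4, ← mul_sum, div_eq_mul_one_div (2 * (M' : ℝ))]
  gcongr
  exact sum_Ioc_one_div_sq_le hD

/-- The expected contribution of the values `M < m ≤ M'` of `⌊x/n⌋`. -/
lemma abs_sum_main_term_sub_le {M M' : ℕ} (hM : M ≤ M') :
    |∑ m ∈ Ioc M M', dedekindPsi m / m / (m * (m + 1)) -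
      (1 / ((M : ℝ) + 1) - 1 / (M' + 1)) * ∑ d ∈ Icc 1 M', sqfreeWeight d / d| ≤
    (1 + Real.log M') / ((M + 1) * (M + 2)) := by
  set v : ℕ → ℝ := fun m => 1 / ((m : ℝ) * (m + 1)) with hv
  have hv1 : ∀ n, 1 ≤ n → v (n + 1) ≤ v n := by
    intro n hn
    have hn0 : (0 : ℝ) < n := by exact_mod_cast hn
    simp only [hv]
    push_cast
    gcongr <;> linarith
  have hv0 : ∀ n, 0 ≤ v n := fun n => by simp only [hv]; positivity
  have htel : ∑ m ∈ Ioc M M', v m = 1 / ((M : ℝ) + 1) - 1 / (M' + 1) := by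
    clear hv0 hv1
    induction M', hM using Nat.le_induction with
    | base => simp
    | succ R hR ih =>
      rw [sum_Ioc_succ_top (by omega), ih]
      simp only [hv]
      push_cast
      field_simp
      ring
  have e : ∑ m ∈ Ioc M M', dedekindPsi m / m / (m * (m + 1)) -
      (1 / ((M : ℝ) + 1) - 1 / (M' + 1)) * ∑ d ∈ Icc 1 M', sqfreeWeight d / d =
      ∑ d ∈ Icc 1 M', sqfreeWeight d *
        ∑ m ∈ Ioc M M', v m * ((if d ∣ m then 1 else 0) - 1 / (d : ℝ)) := by
    have h1 : ∀ m ∈ Ioc M M', dedekindPsi m / m / (m * (m + 1)) =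
        ∑ d ∈ Icc 1 M', sqfreeWeight d * (v m * (if d ∣ m then 1 else 0)) := by
      intro m hm
      rw [mem_Ioc] at hm
      rw [dedekindPsi_div, sum_divisors_eq_sum_Icc sqfreeWeight (by omega) hm.2, sum_div]
      refine sum_congr rfl fun d _ => ?_
      simp only [hv]
      ring
    rw [sum_congr rfl h1, ← htel, sum_comm, mul_sum, ← sum_sub_distrib]
    refine sum_congr rfl fun d _ => ?_
    rw [← mul_sum]
    simp_rw [mul_sub, sum_sub_distrib, ← sum_mul]
    ring
  rw [e]
  refine (abs_sum_le_sum_abs _ _).trans ?_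
  have hterm : ∀ d ∈ Icc 1 M', |sqfreeWeight d *
      ∑ m ∈ Ioc M M', v m * ((if d ∣ m then 1 else 0) - 1 / (d : ℝ))| ≤
      1 / (d : ℝ) * v (M + 1) := by
    intro d hd
    rw [mem_Icc] at hd
    rw [abs_mul, abs_of_nonneg (sqfreeWeight_nonneg d)]
    exact mul_le_mul (sqfreeWeight_le d) (abs_sum_Ioc_dvd_sub_le v hv1 hv0 hd.1 hM)
      (abs_nonneg _) (by positivity)
  refine (sum_le_sum hterm).trans ?_
  rw [← sum_mul]
  have : v (M + 1) = 1 / (((M : ℝ) + 1) * (M + 2)) := by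
    simp only [hv]
    push_cast
    congr 2
    ring
  rw [this, div_eq_mul_one_div (1 + Real.log M')]
  exact mul_le_mul_of_nonneg_right (sum_Icc_one_div_le M') (by positivity)

/-- A sum over the divisors of `m`, separated into `d ≤ D` and `d > D`. -/
lemma sum_divisors_eq_small_add_large (w : ℕ → ℝ) {m : ℕ} (hm : 1 ≤ m) (D : ℕ) :
    ∑ d ∈ m.divisors, w d = ∑ d ∈ Icc 1 D, w d * (if d ∣ m then 1 else 0) +
      ∑ d ∈ m.divisors, if D < d then w d else 0 := by
  have h1 : ∑ d ∈ m.divisors, (if d ≤ D then w d else 0) =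
      ∑ d ∈ Icc 1 D, w d * (if d ∣ m then 1 else 0) := by
    simp only [mul_ite, mul_one, mul_zero]
    rw [← sum_filter, ← sum_filter]
    refine sum_congr ?_ fun _ _ => rfl
    ext d
    simp only [mem_filter, Nat.mem_divisors, mem_Icc]
    refine ⟨fun ⟨⟨a, _⟩, b⟩ => ⟨⟨Nat.pos_of_dvd_of_pos a hm, b⟩, a⟩,
      fun ⟨⟨_, b⟩, a⟩ => ⟨⟨a, by omega⟩, b⟩⟩
  rw [← h1, ← sum_add_distrib]
  refine sum_congr rfl fun d _ => ?_
  rcases le_or_gt d D with h | h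
  · simp [h]
  · simp [h]

lemma sum_Icc_add_sum_Ioc (f : ℕ → ℝ) {a b : ℕ} (h : a ≤ b) :
    ∑ n ∈ Icc 1 a, f n + ∑ n ∈ Ioc a b, f n = ∑ n ∈ Icc 1 b, f n := by
  rw [← sum_union]
  · refine sum_congr ?_ fun _ _ => rfl
    ext n
    simp only [mem_union, mem_Icc, mem_Ioc]
    omega
  · rw [disjoint_left]
    intro n
    simp only [mem_Icc, mem_Ioc]
    omega

lemma natFloor_div_succ_le {x : ℝ} (hx : 0 ≤ x) {M M' : ℕ} (hM : M ≤ M') :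
    ⌊x / (M' + 1)⌋₊ ≤ ⌊x / (M + 1)⌋₊ := by
  gcongr

lemma sum_Ioc_floor_div_eq (g : ℕ → ℝ) {x : ℝ} (hx : 0 ≤ x) {M M' : ℕ} (hM : M ≤ M') :
    ∑ n ∈ Ioc ⌊x / (M' + 1)⌋₊ ⌊x / (M + 1)⌋₊, g ⌊x / n⌋₊ =
      ∑ m ∈ Ioc M M', g m * ((⌊x / m⌋₊ : ℝ) - ⌊x / (m + 1)⌋₊) := by
  have h1 := sum_floor_div_split g hx M
  have h2 := sum_floor_div_split g hx M'
  have h3 := sum_Icc_add_sum_Ioc (fun n => g ⌊x / n⌋₊) (natFloor_div_succ_le hx hM)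
  have h4 := sum_Icc_add_sum_Ioc
    (fun m => g m * ((⌊x / m⌋₊ : ℝ) - ⌊x / (m + 1)⌋₊)) hM
  linarith

/-- The contribution of the middle range `M < ⌊x/n⌋ ≤ M'`. -/
lemma abs_sum_middle_values_sub_le {x Y : ℝ} (hx : 0 < x) (hlog : 1 ≤ Real.log x) (hY : 0 ≤ Y)
    {D M M' : ℕ} (hD : 1 ≤ D) (hDM : D ≤ M') (hM : M ≤ M') (hMx : x ≤ ((M : ℝ) + 1) ^ 2)
    (hNY : (⌊x / (M + 1)⌋₊ : ℝ) ^ 3 * D ≤ Y ^ 2 * x) :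
    |∑ n ∈ Ioc ⌊x / (M' + 1)⌋₊ ⌊x / (M + 1)⌋₊, dedekindPsi ⌊x / n⌋₊ / ⌊x / n⌋₊ -
        x * ∑ m ∈ Ioc M M', dedekindPsi m / m / (m * (m + 1))| ≤
      28800 * (x ^ ((1 : ℝ) / 3) * Real.log x * (∑' d : ℕ, 1 / (d : ℝ) ^ (4 / 3 : ℝ)) + 2 * Y) +
        2 * M' / D + x * ((1 + Real.log M') / ((M + 1) * (M + 2))) + 2 + x / (M + 1) * (1 / D) := by
  set N := ⌊x / (M + 1)⌋₊ with hN
  set N' := ⌊x / (M' + 1)⌋₊ with hN'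
  have hNN : N' ≤ N := natFloor_div_succ_le hx.le hM
  have hNle : (N : ℝ) ≤ x / (M + 1) := Nat.floor_le (by positivity)
  have hN'le : (N' : ℝ) ≤ x / (M' + 1) := Nat.floor_le (by positivity)
  have hNlt : x / (M + 1) < N + 1 := Nat.lt_floor_add_one _
  have hN'lt : x / (M' + 1) < N' + 1 := Nat.lt_floor_add_one _
  have hNx : (N : ℝ) ≤ x := hNle.trans (div_le_self hx.le (by linarith [Nat.cast_nonneg (α := ℝ) M]))
  have hsplit : ∑ n ∈ Ioc N' N, dedekindPsi ⌊x / n⌋₊ / ⌊x / n⌋₊ =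
      ∑ n ∈ Ioc N' N, ∑ d ∈ Icc 1 D, sqfreeWeight d * (if d ∣ ⌊x / n⌋₊ then 1 else 0) +
      ∑ n ∈ Ioc N' N, ∑ d ∈ (⌊x / n⌋₊).divisors, if D < d then sqfreeWeight d else 0 := by
    rw [← sum_add_distrib]
    refine sum_congr rfl fun n hn => ?_
    rw [mem_Ioc] at hn
    have hn0 : (0 : ℝ) < n := by exact_mod_cast (by omega : 0 < n)
    have hm : 1 ≤ ⌊x / n⌋₊ := by
      rw [Nat.one_le_floor_iff, le_div_iff₀ hn0, one_mul]
      exact le_trans (by exact_mod_cast hn.2) hNx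
    rw [dedekindPsi_div, sum_divisors_eq_small_add_large _ hm D]
  have hA := abs_sum_dvd_floor_sub_le hx hlog hY hNN hNx hNY
  have hB := sum_large_divisors_le (M' := M') hx.le hD hMx
  have hBeq := sum_Ioc_floor_div_eq
    (fun m => ∑ d ∈ m.divisors, if D < d then sqfreeWeight d else 0) hx.le hM
  have hB0 : 0 ≤ ∑ n ∈ Ioc N' N,
      ∑ d ∈ (⌊x / n⌋₊).divisors, if D < d then sqfreeWeight d else 0 := by
    refine sum_nonneg fun n _ => sum_nonneg fun d _ => ?_
    split_ifs
    · exact sqfreeWeight_nonneg d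
    · exact le_rfl
  have hC := abs_sum_main_term_sub_le hM
  have hLsplit := sum_Icc_add_sum_Ioc (fun d => sqfreeWeight d / d) hDM
  have hterm : ∀ d : ℕ, sqfreeWeight d / d ≤ 1 / (d : ℝ) ^ 2 := fun d => by
    rw [sq, ← div_div]
    gcongr
    exact sqfreeWeight_le d
  have hterm0 : ∀ d : ℕ, 0 ≤ sqfreeWeight d / d := fun d =>
    div_nonneg (sqfreeWeight_nonneg d) (Nat.cast_nonneg d)
  have hL0 : 0 ≤ ∑ d ∈ Icc 1 D, sqfreeWeight d / d := sum_nonneg fun d _ => hterm0 d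
  have hL2 : ∑ d ∈ Icc 1 D, sqfreeWeight d / d ≤ 2 :=
    (sum_le_sum fun d _ => hterm d).trans (sum_Icc_one_div_sq_le D)
  have hT0 : 0 ≤ ∑ d ∈ Ioc D M', sqfreeWeight d / d := sum_nonneg fun d _ => hterm0 d
  have hT1 : ∑ d ∈ Ioc D M', sqfreeWeight d / d ≤ 1 / D :=
    (sum_le_sum fun d _ => hterm d).trans (sum_Ioc_one_div_sq_le hD)
  rw [hsplit]
  rw [← hLsplit] at hC
  rw [← hBeq] at hB
  generalize ∑ n ∈ Ioc N' N, ∑ d ∈ Icc 1 D, sqfreeWeight d * (if d ∣ ⌊x / n⌋₊ then 1 else 0) = A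
    at *
  generalize ∑ n ∈ Ioc N' N, ∑ d ∈ (⌊x / n⌋₊).divisors, (if D < d then sqfreeWeight d else 0) = B
    at *
  generalize ∑ m ∈ Ioc M M', dedekindPsi m / m / (m * (m + 1)) = F at *
  generalize ∑ d ∈ Icc 1 D, sqfreeWeight d / d = L at *
  generalize ∑ d ∈ Ioc D M', sqfreeWeight d / d = T at *
  have hC' : |x * F - (x / (M + 1) - x / (M' + 1)) * (L + T)| ≤
      x * ((1 + Real.log M') / ((M + 1) * (M + 2))) := by
    have : x * F - (x / (M + 1) - x / (M' + 1)) * (L + T) =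
        x * (F - (1 / ((M : ℝ) + 1) - 1 / (M' + 1)) * (L + T)) := by ring
    rw [this, abs_mul, abs_of_pos hx]
    gcongr
  have hE : |((N : ℝ) - N' - (x / (M + 1) - x / (M' + 1))) * L| ≤ 2 := by
    rw [abs_mul, abs_of_nonneg hL0]
    have : |(N : ℝ) - N' - (x / (M + 1) - x / (M' + 1))| ≤ 1 := by
      rw [abs_le]; constructor <;> linarith
    nlinarith
  have hG0 : 0 ≤ x / (M + 1) - x / (M' + 1) := by
    have : x / (M' + 1) ≤ x / (M + 1) := by gcongr
    linarith
  have hG : |(x / (M + 1) - x / (M' + 1)) * T| ≤ x / (M + 1) * (1 / D) := by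
    rw [abs_of_nonneg (mul_nonneg hG0 hT0)]
    have : 0 ≤ x / (M' + 1) := by positivity
    gcongr
    linarith
  rw [abs_le] at hA hC' hE hG ⊢
  constructor <;> linarith

/-- The contribution of the small `n`. -/
lemma sum_Icc_dedekindPsi_floor_le {x : ℝ} (hx : 1 ≤ x) (N : ℕ) :
    ∑ n ∈ Icc 1 N, dedekindPsi ⌊x / n⌋₊ / ⌊x / n⌋₊ ≤ N * (1 + Real.log x) := by
  have h : ∀ n ∈ Icc 1 N, dedekindPsi ⌊x / n⌋₊ / ⌊x / n⌋₊ ≤ 1 + Real.log x := fun n hn => by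
    refine (dedekindPsi_div_le _).trans ?_
    rcases Nat.eq_zero_or_pos ⌊x / n⌋₊ with h0 | h0
    · simp [h0, Real.log_nonneg hx]
    · have hn1 : (1 : ℝ) ≤ n := by exact_mod_cast (mem_Icc.1 hn).1
      have : (⌊x / n⌋₊ : ℝ) ≤ x :=
        (Nat.floor_le (by positivity)).trans (div_le_self (by linarith) hn1)
      have := Real.log_le_log (by exact_mod_cast h0) this
      linarith
  simpa [mul_add] using sum_le_card_nsmul _ _ _ h

lemma abs_sum_dedekindPsi_ratio_floor_div_sub_le {x : ℝ} (hx : 8 ≤ x) :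
    |∑ n ∈ Icc 1 ⌊x⌋₊, dedekindPsi ⌊x / n⌋₊ / ⌊x / n⌋₊ -
        x * ∑' m : ℕ, dedekindPsi m / (m ^ 2 * (m + 1))| ≤
      (43200 * ((∑' d : ℕ, 1 / (d : ℝ) ^ (4 / 3 : ℝ)) + 2) + 20) *
        (x ^ ((1 : ℝ) / 3) * Real.log x) := by
  have hx0 : 0 < x := by linarith
  obtain ⟨t, ht0, htx⟩ : ∃ t : ℝ, 0 < t ∧ t ^ 9 = x :=
    ⟨x ^ ((1 : ℝ) / 9), by positivity, by
      rw [← Real.rpow_natCast, ← Real.rpow_mul hx0.le]; norm_num⟩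
  have hx3 : x ^ ((1 : ℝ) / 3) = t ^ 3 := by
    rw [← htx, ← Real.rpow_natCast, ← Real.rpow_natCast, ← Real.rpow_mul ht0.le]; norm_num
  have ht3 : 2 ≤ t ^ 3 := by
    by_contra! h
    have : (t ^ 3) ^ 3 < 2 ^ 3 := by gcongr
    nlinarith
  have ht1 : 1 ≤ t := by
    by_contra! h
    have : t ^ 3 ≤ 1 := pow_le_one₀ ht0.le h.le
    linarith
  have hlog : 1 ≤ Real.log x := by
    rw [Real.le_log_iff_exp_le hx0]
    linarith [Real.exp_one_lt_d9]
  set M := ⌊t ^ 5⌋₊ with hMdef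
  set M' := ⌊t ^ 6⌋₊ with hM'def
  set D := ⌊t ^ 3⌋₊ with hDdef
  have hMle : (M : ℝ) ≤ t ^ 5 := Nat.floor_le (by positivity)
  have hM'le : (M' : ℝ) ≤ t ^ 6 := Nat.floor_le (by positivity)
  have hDle : (D : ℝ) ≤ t ^ 3 := Nat.floor_le (by positivity)
  have hMlt : t ^ 5 < M + 1 := Nat.lt_floor_add_one _
  have hM'lt : t ^ 6 < M' + 1 := Nat.lt_floor_add_one _
  have hDlt : t ^ 3 < D + 1 := Nat.lt_floor_add_one _
  have hMM' : M ≤ M' := Nat.floor_le_floor (pow_le_pow_right₀ ht1 (by norm_num))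
  have hDM' : D ≤ M' := Nat.floor_le_floor (pow_le_pow_right₀ ht1 (by norm_num))
  have hD1 : 1 ≤ D := by
    rw [hDdef, Nat.one_le_floor_iff]
    linarith
  have hM'1 : (1 : ℝ) ≤ M' := by exact_mod_cast hD1.trans hDM'
  have hDhalf : t ^ 3 / 2 ≤ D := by linarith
  have hDpos : (0 : ℝ) < D := by linarith
  have hN : (⌊x / (M + 1)⌋₊ : ℝ) ≤ t ^ 4 := by
    refine (Nat.floor_le (by positivity)).trans ?_
    rw [div_le_iff₀ (by positivity), ← htx]
    calc t ^ 9 = t ^ 4 * t ^ 5 := by ring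
      _ ≤ _ := by gcongr
  have hN' : (⌊x / (M' + 1)⌋₊ : ℝ) ≤ t ^ 3 := by
    refine (Nat.floor_le (by positivity)).trans ?_
    rw [div_le_iff₀ (by positivity), ← htx]
    calc t ^ 9 = t ^ 3 * t ^ 6 := by ring
      _ ≤ _ := by gcongr
  have hM'x : (M' : ℝ) ≤ x := by
    rw [← htx]
    exact hM'le.trans (pow_le_pow_right₀ ht1 (by norm_num))
  have hMx : (M : ℝ) ≤ x := le_trans (by exact_mod_cast hMM') hM'x
  have hMcube : (M : ℝ) ^ 3 ≤ (t ^ 3) ^ 2 * x := by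
    calc (M : ℝ) ^ 3 ≤ (t ^ 5) ^ 3 := by gcongr
      _ = _ := by rw [← htx]; ring
  have hMsq : x ≤ ((M : ℝ) + 1) ^ 2 := by
    calc x = t ^ 9 := htx.symm
      _ ≤ t ^ 10 := pow_le_pow_right₀ ht1 (by norm_num)
      _ = (t ^ 5) ^ 2 := by ring
      _ ≤ _ := by gcongr
  have hNcube : (⌊x / (M + 1)⌋₊ : ℝ) ^ 3 * D ≤ (t ^ 3) ^ 2 * x := by
    calc _ ≤ (t ^ 4) ^ 3 * t ^ 3 := by gcongr
      _ = _ := by rw [← htx]; ring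
  have hsmall := abs_sum_small_values_sub_le hx0 hlog (by positivity) hMx hMcube
  have hmid := abs_sum_middle_values_sub_le hx0 hlog (by positivity) hD1 hDM' hMM' hMsq hNcube
  have hfirst := sum_Icc_dedekindPsi_floor_le (by linarith : 1 ≤ x) ⌊x / (M' + 1)⌋₊
  have hfirst0 : 0 ≤ ∑ n ∈ Icc 1 ⌊x / (M' + 1)⌋₊, dedekindPsi ⌊x / n⌋₊ / ⌊x / n⌋₊ :=
    sum_nonneg fun n _ => dedekindPsi_div_nonneg _
  obtain ⟨htail0, htail⟩ := tsum_dedekindPsi_tail M'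
  have hsplit := sum_floor_div_split (fun m => dedekindPsi m / m) hx0.le M
  have hIcc := sum_Icc_add_sum_Ioc (fun n => dedekindPsi ⌊x / n⌋₊ / ⌊x / n⌋₊)
    (natFloor_div_succ_le hx0.le hMM')
  have hmain := sum_Icc_add_sum_Ioc (fun m => dedekindPsi m / m / (m * (m + 1))) hMM'
  have hQ : t ^ 3 ≤ t ^ 3 * Real.log x := le_mul_of_one_le_right (by positivity) hlog
  have hQ' : Real.log x ≤ t ^ 3 * Real.log x := le_mul_of_one_le_left (by linarith) (by linarith)
  have hlogM' : Real.log M' ≤ Real.log x := Real.log_le_log (by linarith) hM'x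
  have hlogM'1 : Real.log (M' + 1) ≤ 1 + Real.log x := by
    have h2 : Real.log (M' + 1) ≤ Real.log (2 * x) :=
      Real.log_le_log (by positivity) (by linarith)
    rw [Real.log_mul (by norm_num) hx0.ne'] at h2
    linarith [Real.log_two_lt_d9]
  have bfirst : ⌊x / (M' + 1)⌋₊ * (1 + Real.log x) ≤ 2 * (t ^ 3 * Real.log x) := by
    calc _ ≤ t ^ 3 * (1 + Real.log x) := by gcongr
      _ ≤ _ := by linarith
  have btail : x * ((2 + Real.log (M' + 1)) / (M' + 1)) ≤ 4 * (t ^ 3 * Real.log x) := by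
    calc _ ≤ t ^ 9 * ((4 * Real.log x) / t ^ 6) := by
          rw [htx]
          gcongr
          linarith
      _ = _ := by field_simp
  have blarge : 2 * (M' : ℝ) / D ≤ 4 * (t ^ 3 * Real.log x) := by
    calc 2 * (M' : ℝ) / D ≤ 2 * t ^ 6 / (t ^ 3 / 2) := by gcongr
      _ = 4 * t ^ 3 := by field_simp; norm_num
      _ ≤ _ := by linarith
  have bmain : x * ((1 + Real.log M') / ((M + 1) * (M + 2))) ≤ 2 * (t ^ 3 * Real.log x) := by
    have : 0 ≤ 1 + Real.log M' := by linarith [Real.log_nonneg hM'1]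
    calc x * ((1 + Real.log M') / ((M + 1) * (M + 2)))
        ≤ ((M : ℝ) + 1) ^ 2 * ((1 + Real.log M') / ((M + 1) * (M + 1))) := by
          gcongr
          norm_num
      _ = 1 + Real.log M' := by field_simp
      _ ≤ _ := by linarith
  have bquot : x / (M + 1) * (1 / D) ≤ 2 * (t ^ 3 * Real.log x) := by
    calc x / (M + 1) * (1 / D) ≤ t ^ 9 / t ^ 5 * (1 / (t ^ 3 / 2)) := by
          rw [htx]
          gcongr
      _ = 2 * t := by field_simp
      _ ≤ 2 * t ^ 3 := by
          gcongr
          exact le_self_pow₀ ht1 (by norm_num)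
      _ ≤ _ := by linarith
  rw [hx3] at hsmall hmid ⊢
  have htail' : x * (∑' m : ℕ, dedekindPsi m / (m ^ 2 * (m + 1)) -
      ∑ m ∈ Icc 1 M', dedekindPsi m / m / (m * (m + 1))) ≤
      x * ((2 + Real.log (M' + 1)) / (M' + 1)) := by gcongr
  have htail0' := mul_nonneg hx0.le htail0
  rw [← hmain, mul_sub, mul_add] at htail' htail0'
  rw [hsplit, ← hIcc]
  rw [abs_le] at hsmall hmid ⊢
  constructor <;> linarith

/-- `∑_{n ≤ x} Ψ(⌊x/n⌋)/⌊x/n⌋ = x ∑_{m ≥ 1} Ψ(m)/(m²(m+1)) + O(x^{1/3} log x)`. -/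
theorem sum_dedekindPsi_ratio_floor_div :
    (fun x : ℝ =>
        (∑ n ∈ Finset.Icc 1 ⌊x⌋₊,
          dedekindPsi ⌊x / (n : ℝ)⌋₊ / (⌊x / (n : ℝ)⌋₊ : ℝ)) -
        x * ∑' m : ℕ, dedekindPsi m / (m ^ 2 * (m + 1)))
    =O[atTop] fun x : ℝ => x ^ ((1 : ℝ) / 3) * Real.log x := by
  refine Asymptotics.IsBigO.of_bound
    (43200 * ((∑' d : ℕ, 1 / (d : ℝ) ^ (4 / 3 : ℝ)) + 2) + 20) ?_
  filter_upwards [eventually_ge_atTop 8] with x hx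
  have hlog : 0 ≤ Real.log x := Real.log_nonneg (by linarith)
  rw [Real.norm_eq_abs, Real.norm_of_nonneg (by positivity)]
  exact abs_sum_dedekindPsi_ratio_floor_div_sub_le hx
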